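/- arXiv:1702.06859 — 3 statements merged into one kernel-verified Lean document; each statement's English description precedes it below -/
import Mathlib

section
/- Let T > 0, let σ : ℝ → ℝ be Lipschitz continuous with σ(x) > 0 for all x, let b and b̃ belong to the class M, and let f : ℝ → ℝ be of class C² with f'(x) ≠ 0 for all x ∈ ℝ. Let u be a classical solution of the parabolic equation associated with (b, σ, f) and let ũ be a classical solution of the parabolic equation associated with (b̃, σ, f), and suppose there exist ε ∈ (0, T) and a nonempty open set ω ⊂ ℝ with u = ũ on (0, ε) × ω. Let x₀ ∈ ω and x₂ > x₀ be such that b − b̃ has a constant sign on [x₀, x₂] (i.e., b − b̃ ≥ 0 on [x₀, x₂] or b − b̃ ≤ 0 on [x₀, x₂]). Then b(x) = b̃(x) for all x ∈ [x₀, x₂]. -/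
open Set Filter

/-- A function `ψ : ℝ → ℝ` is piecewise analytic if there exist `δ > 0`, a strictly
increasing sequence `(κ j)_{j ∈ ℤ}` tending to `-∞` at `-∞` and `+∞` at `+∞` with
`κ (j+1) - κ j > δ`, and functions `φ j` analytic on `[κ j, κ (j+1)]`, such that
`ψ = φ j` on `[κ j, κ (j+1))`. -/
def PiecewiseAnalytic (ψ : ℝ → ℝ) : Prop :=
  ∃ (δ : ℝ) (κ : ℤ → ℝ) (φ : ℤ → ℝ → ℝ),
    0 < δ ∧ StrictMono κ ∧
    Tendsto κ atBot atBot ∧ Tendsto κ atTop atTop ∧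
    (∀ j : ℤ, δ < κ (j + 1) - κ j) ∧
    (∀ j : ℤ, AnalyticOn ℝ (φ j) (Icc (κ j) (κ (j + 1)))) ∧
    (∀ j : ℤ, ∀ x ∈ Ico (κ j) (κ (j + 1)), ψ x = φ j x)

/-- The class `M` of Lipschitz-continuous, piecewise analytic functions on `ℝ`. -/
def ClassM (ψ : ℝ → ℝ) : Prop :=
  (∃ K, LipschitzWith K ψ) ∧ PiecewiseAnalytic ψ

/-- `u : [0,T) × ℝ → ℝ` is a classical solution of
`∂ₜ u = (1/2) σ(x)² ∂ₓₓ u + b(x) ∂ₓ u`, `u(0, ·) = f`: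
`u`, `∂ₜ u`, `∂ₓ u`, `∂ₓₓ u` exist and are continuous on `[0,T) × ℝ`, the PDE holds
there, and the initial condition holds. -/
def IsClassicalSolution (T : ℝ) (b σ f : ℝ → ℝ) (u : ℝ → ℝ → ℝ) : Prop :=
  ContinuousOn (fun p : ℝ × ℝ => u p.1 p.2) (Ico 0 T ×ˢ univ) ∧
  (∀ t ∈ Ico 0 T, ∀ x : ℝ, DifferentiableAt ℝ (fun s => u s x) t) ∧
  (∀ t ∈ Ico 0 T, ∀ x : ℝ, DifferentiableAt ℝ (fun y => u t y) x) ∧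
  (∀ t ∈ Ico 0 T, ∀ x : ℝ, DifferentiableAt ℝ (deriv (fun y => u t y)) x) ∧
  ContinuousOn (fun p : ℝ × ℝ => deriv (fun s => u s p.2) p.1) (Ico 0 T ×ˢ univ) ∧
  ContinuousOn (fun p : ℝ × ℝ => deriv (fun y => u p.1 y) p.2) (Ico 0 T ×ˢ univ) ∧
  ContinuousOn (fun p : ℝ × ℝ => deriv (deriv (fun y => u p.1 y)) p.2) (Ico 0 T ×ˢ univ) ∧
  (∀ t ∈ Ico 0 T, ∀ x : ℝ,
    deriv (fun s => u s x) t =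
      (1 / 2) * (σ x) ^ 2 * deriv (deriv (fun y => u t y)) x
        + b x * deriv (fun y => u t y) x) ∧
  (∀ x : ℝ, u 0 x = f x)

/-- `ψ` has a constant sign on `s`: it is nonnegative on all of `s` or nonpositive on
all of `s`. -/
def ConstSignOn (ψ : ℝ → ℝ) (s : Set ℝ) : Prop :=
  (∀ x ∈ s, 0 ≤ ψ x) ∨ (∀ x ∈ s, ψ x ≤ 0)

lemma slope_pos_aux (g : ℝ → ℝ) (g' x : ℝ) (h : HasDerivAt g g' x) (hg : 0 < g') :
    ∃ δ > 0, ∀ y, y ≠ x → |y - x| < δ → 0 < (g y - g x) * (y - x) := by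
  have h1 := hasDerivAt_iff_tendsto_slope.1 h
  have h2 := h1.eventually (lt_mem_nhds hg)
  rw [eventually_nhdsWithin_iff, Metric.eventually_nhds_iff] at h2
  obtain ⟨δ, hδ, h3⟩ := h2
  refine ⟨δ, hδ, fun y hy hd => ?_⟩
  have h4 := h3 (y := y) (by simpa [Real.dist_eq] using hd) hy
  rw [slope_def_field] at h4
  have hne : y - x ≠ 0 := sub_ne_zero.2 hy
  have h5 : (g y - g x) * (y - x) = (g y - g x) / (y - x) * (y - x) ^ 2 := by field_simp
  rw [h5]
  positivity

lemma second_deriv_nonneg_aux (g g' : ℝ → ℝ) (c x : ℝ) (h : ∀ y, HasDerivAt g (g' y) y)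
    (h' : HasDerivAt g' c x) (hm : IsLocalMin g x) : 0 ≤ c := by
  by_contra hc
  push Not at hc
  have hd : deriv g = g' := funext fun y => (h y).deriv
  have h0 : deriv g x = 0 := hm.deriv_eq_zero
  have hmax : IsLocalMax g x := isLocalMax_of_deriv_deriv_neg (by rw [hd, h'.deriv]; exact hc) h0
    (h x).continuousAt
  have he : g =ᶠ[nhds x] fun _ => g x := by
    filter_upwards [hm, hmax] with y h1 h2
    exact le_antisymm h2 h1
  have h2 : deriv (deriv g) x = 0 := by
    have := he.deriv
    rw [this.deriv_eq]
    simp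
  rw [hd, h'.deriv] at h2
  linarith

/-- Weak minimum principle on a rectangle. -/
lemma weak_min_aux (a b : ℝ → ℝ) (t₁ τ l r : ℝ) (ha : ∀ x, 0 ≤ a x)
    (W Wt Wx Wxx : ℝ → ℝ → ℝ)
    (hc : ContinuousOn (fun p : ℝ × ℝ => W p.1 p.2) (Icc t₁ τ ×ˢ Icc l r))
    (ht : ∀ t ∈ Icc t₁ τ, ∀ x, HasDerivAt (fun s => W s x) (Wt t x) t)
    (hx : ∀ t ∈ Icc t₁ τ, ∀ x, HasDerivAt (W t) (Wx t x) x)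
    (hxx : ∀ t ∈ Icc t₁ τ, ∀ x, HasDerivAt (Wx t) (Wxx t x) x)
    (hL : ∀ t ∈ Icc t₁ τ, ∀ x ∈ Icc l r, a x * Wxx t x + b x * Wx t x ≤ Wt t x)
    (h0 : ∀ x ∈ Icc l r, 0 ≤ W t₁ x)
    (hl : ∀ t ∈ Icc t₁ τ, 0 ≤ W t l) (hr : ∀ t ∈ Icc t₁ τ, 0 ≤ W t r) :
    ∀ t ∈ Icc t₁ τ, ∀ x ∈ Icc l r, 0 ≤ W t x := by
  intro t htt x hxx'
  by_contra hneg
  push Not at hneg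
  obtain ⟨κ, hκ, hκ2⟩ : ∃ κ > 0, W t x + κ * (t - t₁) < 0 := by
    refine ⟨-W t x / (2 * (t - t₁ + 1)), ?_, ?_⟩
    · have := htt.1
      apply div_pos <;> linarith
    · have h1 : 0 ≤ t - t₁ := by linarith [htt.1]
      have h2 : -W t x / (2 * (t - t₁ + 1)) * (t - t₁) ≤ -W t x / 2 := by
        rw [div_mul_eq_mul_div, div_le_div_iff₀ (by linarith) (by norm_num)]
        nlinarith
      linarith
  have hK : IsCompact (Icc t₁ τ ×ˢ Icc l r) := isCompact_Icc.prod isCompact_Icc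
  have hcc : ContinuousOn (fun p : ℝ × ℝ => W p.1 p.2 + κ * (p.1 - t₁)) (Icc t₁ τ ×ˢ Icc l r) :=
    hc.add (by fun_prop)
  obtain ⟨⟨s, y⟩, ⟨hs, hy⟩, hmin⟩ := hK.exists_isMinOn ⟨(t, x), htt, hxx'⟩ hcc
  have hmin' : ∀ s' ∈ Icc t₁ τ, ∀ y' ∈ Icc l r,
      W s y + κ * (s - t₁) ≤ W s' y' + κ * (s' - t₁) := fun s' hs' y' hy' =>
    isMinOn_iff.1 hmin (s', y') ⟨hs', hy'⟩
  simp only at hs hy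
  have hlt : W s y + κ * (s - t₁) < 0 := lt_of_le_of_lt (hmin' t htt x hxx') hκ2
  have hsn : 0 ≤ κ * (s - t₁) := mul_nonneg hκ.le (by linarith [hs.1])
  have hs1 : t₁ < s := by
    rcases hs.1.eq_or_lt with h | h
    · subst h; linarith [h0 y hy]
    · exact h
  have hyl : l < y := by
    rcases hy.1.eq_or_lt with h | h
    · subst h; linarith [hl s hs]
    · exact h
  have hyr : y < r := by
    rcases hy.2.eq_or_lt with h | h
    · subst h; linarith [hr s hs]
    · exact h
  have hloc : IsLocalMin (W s) y := by
    filter_upwards [Icc_mem_nhds hyl hyr] with z hz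
    linarith [hmin' s hs z hz]
  have e1 : Wx s y = 0 := hloc.hasDerivAt_eq_zero (hx s hs y)
  have e2 := second_deriv_nonneg_aux (W s) (Wx s) _ y (hx s hs) (hxx s hs y) hloc
  have e3 := hL s hs y hy
  rw [e1] at e3
  have e4 : 0 ≤ a y * Wxx s y := mul_nonneg (ha y) e2
  have hd : HasDerivAt (fun s => W s y + κ * (s - t₁)) (Wt s y + κ * 1) s :=
    (ht s hs y).add (((hasDerivAt_id s).sub_const t₁).const_mul κ)
  obtain ⟨δ, hδ, h5⟩ := slope_pos_aux _ _ _ hd (by linarith)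
  set s' := max t₁ (s - δ / 2) with hs'
  have h6 : s' < s := max_lt hs1 (by linarith)
  have h7 : s - δ / 2 ≤ s' := le_max_right _ _
  have h8 : t₁ ≤ s' := le_max_left _ _
  have h9 := h5 s' h6.ne (by rw [abs_lt]; constructor <;> linarith)
  have h10 := hmin' s' ⟨h8, by linarith [hs.2]⟩ y hy
  nlinarith

lemma core_aux (a b : ℝ → ℝ) (hac : Continuous a) (ha : ∀ x, 0 < a x) (hb : Continuous b)
    (x₀ x₁ τ₀ η : ℝ) (hx01 : x₀ ≤ x₁) (hτ₀ : 0 < τ₀) (hη : 0 < η)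
    (U Ut Ux Uxx : ℝ → ℝ → ℝ)
    (hc : ContinuousOn (fun p : ℝ × ℝ => U p.1 p.2) (Icc 0 τ₀ ×ˢ Icc x₀ x₁))
    (ht : ∀ t ∈ Icc 0 τ₀, ∀ x, HasDerivAt (fun s => U s x) (Ut t x) t)
    (hx : ∀ t ∈ Icc 0 τ₀, ∀ x, HasDerivAt (U t) (Ux t x) x)
    (hxx : ∀ t ∈ Icc 0 τ₀, ∀ x, HasDerivAt (Ux t) (Uxx t x) x)
    (hL : ∀ t ∈ Icc 0 τ₀, ∀ x ∈ Icc x₀ x₁, a x * Uxx t x + b x * Ux t x ≤ Ut t x)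
    (h0 : ∀ x, U 0 x = 0) (hpos : 0 < Ut 0 x₁)
    (hz : ∀ t ∈ Icc 0 τ₀, ∀ x ∈ Ico x₀ (x₀ + η), U t x = 0) : False := by
  obtain ⟨δ, hδ, h5⟩ := slope_pos_aux _ _ _ (ht 0 ⟨le_rfl, hτ₀.le⟩ x₁) hpos
  obtain ⟨τ, hτ, hττ, hτδ⟩ : ∃ τ, 0 < τ ∧ τ ≤ τ₀ ∧ τ < δ :=
    ⟨min τ₀ (δ / 2), by positivity, min_le_left _ _, by
      linarith [min_le_right τ₀ (δ / 2)]⟩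
  have hU1 : ∀ t ∈ Ioc 0 τ, 0 < U t x₁ := by
    intro t htt
    have := h5 t htt.1.ne' (by rw [abs_lt]; constructor <;> linarith [htt.1, htt.2])
    simp only [h0, sub_zero] at this
    exact (pos_iff_pos_of_mul_pos this).2 htt.1
  rcases hx01.eq_or_lt with heq | hlt
  · have h1 := hU1 τ ⟨hτ, le_rfl⟩
    rw [← heq, hz τ ⟨hτ.le, hττ⟩ x₀ ⟨le_rfl, by linarith⟩] at h1
    exact lt_irrefl _ h1
  have hsub : ∀ {t}, t ∈ Icc 0 τ → t ∈ Icc 0 τ₀ := fun h => ⟨h.1, h.2.trans hττ⟩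
  have hUnn : ∀ t ∈ Icc 0 τ, ∀ x ∈ Icc x₀ x₁, 0 ≤ U t x := by
    refine weak_min_aux a b 0 τ x₀ x₁ (fun x => (ha x).le) U Ut Ux Uxx
      (hc.mono (prod_mono (fun _ => hsub) subset_rfl)) (fun t h => ht t (hsub h))
      (fun t h => hx t (hsub h)) (fun t h => hxx t (hsub h)) (fun t h => hL t (hsub h))
      (fun x _ => (h0 x).ge) (fun t h => (hz t (hsub h) x₀ ⟨le_rfl, by linarith⟩).ge) ?_
    intro t h
    rcases h.1.eq_or_lt with h' | h'
    · rw [← h', h0]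
    · exact (hU1 t ⟨h', h.2⟩).le
  have hsub2 : ∀ {t}, t ∈ Icc (τ / 2) τ → t ∈ Icc 0 τ := fun h => ⟨by linarith [h.1], h.2⟩
  obtain ⟨m, hm, hmU⟩ : ∃ m > 0, ∀ t ∈ Icc (τ / 2) τ, m ≤ U t x₁ := by
    have hcx : ContinuousOn (fun t => U t x₁) (Icc (τ / 2) τ) := fun t h =>
      (ht t (hsub (hsub2 h)) x₁).continuousAt.continuousWithinAt
    obtain ⟨s, hs, hmin⟩ := isCompact_Icc.exists_isMinOn ⟨τ, by constructor <;> linarith⟩ hcx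
    exact ⟨U s x₁, hU1 s ⟨by linarith [hs.1], hs.2⟩, fun t h => isMinOn_iff.1 hmin t h⟩
  obtain ⟨c, hcp, hca⟩ : ∃ c > 0, ∀ x ∈ Icc x₀ x₁, c ≤ a x := by
    obtain ⟨s, hs, hmin⟩ := isCompact_Icc.exists_isMinOn ⟨x₁, hlt.le, le_rfl⟩ hac.continuousOn
    exact ⟨a s, ha s, fun t h => isMinOn_iff.1 hmin t h⟩
  obtain ⟨B, hB⟩ : ∃ B, ∀ x ∈ Icc x₀ x₁, B ≤ b x := by
    obtain ⟨s, hs, hmin⟩ := isCompact_Icc.exists_isMinOn ⟨x₁, hlt.le, le_rfl⟩ hb.continuousOn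
    exact ⟨b s, fun t h => isMinOn_iff.1 hmin t h⟩
  set v : ℝ := (x₁ - x₀) / (τ / 2) with hv
  have hvp : 0 < v := by apply div_pos <;> linarith
  have hvτ : v * (τ / 2) = x₁ - x₀ := by rw [hv]; field_simp
  obtain ⟨α, hα, hαc⟩ : ∃ α > 0, v ≤ c * α + B := by
    refine ⟨(v + |B|) / c, by positivity, ?_⟩
    rw [mul_div_cancel₀ _ hcp.ne']
    linarith [neg_abs_le B]
  set E : ℝ → ℝ → ℝ := fun t x => Real.exp (α * (x - x₁ + v * (t - τ / 2))) with hE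
  set d : ℝ := m / Real.exp (α * (x₁ - x₀)) with hd
  have hdp : 0 < d := by positivity
  have hEt : ∀ t x, HasDerivAt (fun s => E s x) (E t x * (α * v)) t := by
    intro t x
    have : HasDerivAt (fun s => α * (x - x₁ + v * (s - τ / 2))) (α * (v * 1)) t :=
      ((((hasDerivAt_id t).sub_const (τ / 2)).const_mul v).const_add (x - x₁)).const_mul α
    simpa [hE] using this.exp
  have hEx : ∀ t x, HasDerivAt (E t) (E t x * α) x := by
    intro t x
    have : HasDerivAt (fun y => α * (y - x₁ + v * (t - τ / 2))) (α * 1) x :=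
      (((hasDerivAt_id x).sub_const x₁).add_const (v * (t - τ / 2))).const_mul α
    simpa [hE] using this.exp
  have hEp : ∀ t x, 0 < E t x := fun t x => Real.exp_pos _
  have key := weak_min_aux a b (τ / 2) τ x₀ x₁ (fun x => (ha x).le)
    (fun t x => U t x - d * (E t x - 1)) (fun t x => Ut t x - d * (E t x * (α * v)))
    (fun t x => Ux t x - d * (E t x * α)) (fun t x => Uxx t x - d * (E t x * α * α))
    ((hc.mono (prod_mono (fun _ h => hsub (hsub2 h)) subset_rfl)).sub
      (by simp only [hE]; fun_prop))
    (fun t h x => (ht t (hsub (hsub2 h)) x).sub (((hEt t x).sub_const 1).const_mul d))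
    (fun t h x => (hx t (hsub (hsub2 h)) x).sub (((hEx t x).sub_const 1).const_mul d))
    (fun t h x => (hxx t (hsub (hsub2 h)) x).sub (((hEx t x).mul_const α).const_mul d))
    (by
      intro t h x hxI
      have h1 := hL t (hsub (hsub2 h)) x hxI
      have h2 : v ≤ a x * α + b x := by
        nlinarith [hca x hxI, hB x hxI]
      have h3 : 0 ≤ d * E t x * α * (a x * α + b x - v) :=
        mul_nonneg (by have := hEp t x; positivity) (by linarith)
      nlinarith)
    (by
      intro x hxI
      have h1 := hUnn (τ / 2) ⟨by linarith, by linarith⟩ x hxI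
      have h2 : E (τ / 2) x ≤ 1 := by
        simp only [hE, sub_self, mul_zero, add_zero, Real.exp_le_one_iff]
        nlinarith [hxI.2]
      nlinarith)
    (by
      intro t h
      have h1 := hz t (hsub (hsub2 h)) x₀ ⟨le_rfl, by linarith⟩
      have h2 : E t x₀ ≤ 1 := by
        simp only [hE, Real.exp_le_one_iff]
        have : v * (t - τ / 2) ≤ x₁ - x₀ := by nlinarith [h.2]
        nlinarith
      simp only [h1]
      nlinarith)
    (by
      intro t h
      have h1 := hmU t h
      have h2 : E t x₁ ≤ Real.exp (α * (x₁ - x₀)) := by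
        simp only [hE]
        apply Real.exp_le_exp.2
        have : v * (t - τ / 2) ≤ x₁ - x₀ := by nlinarith [h.2]
        nlinarith
      have h3 : d * Real.exp (α * (x₁ - x₀)) = m := by
        rw [hd]; field_simp
      nlinarith)
  obtain ⟨z, hz0, hz1, hzη⟩ : ∃ z, x₀ < z ∧ z ≤ x₁ ∧ z < x₀ + η :=
    ⟨min x₁ (x₀ + η / 2), lt_min hlt (by linarith), min_le_left _ _, by
      linarith [min_le_right x₁ (x₀ + η / 2)]⟩
  have h1 := key τ ⟨by linarith, le_rfl⟩ z ⟨hz0.le, hz1⟩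
  have h2 := hz τ ⟨hτ.le, hττ⟩ z ⟨hz0.le, hzη⟩
  have h3 : 1 < E τ z := by
    simp only [hE]
    apply Real.one_lt_exp_iff.2
    have : v * (τ - τ / 2) = x₁ - x₀ := by rw [← hvτ]; ring
    rw [this]
    apply mul_pos hα; linarith
  simp only [h2] at h1
  nlinarith

/-- Key step in the proof of Theorem 1: on an interval `[x₀, x₂]` (with `x₀` in the
observation set) where `b - bt` has a constant sign, the observation forces `b = bt`. -/
theorem drift_uniqueness_constant_sign_interval
    (T : ℝ) (hT : 0 < T)
    (sigma b bt : ℝ → ℝ)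
    (hsLip : ∃ K, LipschitzWith K sigma) (hspos : ∀ x, 0 < sigma x)
    (hb : ClassM b) (hbt : ClassM bt)
    (f : ℝ → ℝ) (hf : ContDiff ℝ 2 f) (hfd : ∀ x, deriv f x ≠ 0)
    (u ut : ℝ → ℝ → ℝ)
    (hu : IsClassicalSolution T b sigma f u)
    (hut : IsClassicalSolution T bt sigma f ut)
    (ε : ℝ) (hε : ε ∈ Ioo 0 T)
    (ω : Set ℝ) (hω : IsOpen ω) (hωne : ω.Nonempty)
    (hobs : ∀ t ∈ Ioo 0 ε, ∀ x ∈ ω, u t x = ut t x)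
    (x₀ x₂ : ℝ) (hx₀ : x₀ ∈ ω) (hx₂ : x₀ < x₂)
    (hsign : ConstSignOn (fun x => b x - bt x) (Icc x₀ x₂)) :
    ∀ x ∈ Icc x₀ x₂, b x = bt x := by
  intro x₁ hx₁
  by_contra hne
  obtain ⟨Kσ, hKσ⟩ := hsLip
  obtain ⟨⟨Kb, hKb⟩, -⟩ := hb
  obtain ⟨⟨Kbt, hKbt⟩, -⟩ := hbt
  obtain ⟨uc, ut1, ux1, uxx1, utc, uxc, uxxc, upde, ui⟩ := hu
  obtain ⟨wc, wt1, wx1, wxx1, wtc, wxc, wxxc, wpde, wi⟩ := hut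
  have h0T : (0 : ℝ) ∈ Ico 0 T := ⟨le_rfl, hT⟩
  have ui' : u 0 = f := funext ui
  have wi' : ut 0 = f := funext wi
  have hf'c : Continuous (deriv f) := hf.continuous_deriv (by norm_num)
  have hf'pos : ∀ x, 0 < deriv f x₁ * deriv f x := by
    intro x
    by_contra hcon
    push Not at hcon
    have hcont : Continuous (fun y => deriv f x₁ * deriv f y) := by fun_prop
    have h1 : 0 < deriv f x₁ * deriv f x₁ := mul_self_pos.2 (hfd x₁)
    obtain ⟨y, hy⟩ := mem_range_of_exists_le_of_exists_ge hcont ⟨x, hcon⟩ ⟨x₁, h1.le⟩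
    exact (mul_ne_zero (hfd x₁) (hfd y)) hy
  have htube : ∀ᶠ t in nhds (0 : ℝ), ∀ x ∈ Icc x₀ x₂, t ∈ Ico 0 T →
      0 < deriv f x₁ * deriv (fun y => ut t y) x := by
    apply isCompact_Icc.eventually_forall_of_forall_eventually
    intro x hx
    have h1 : ContinuousWithinAt
        (fun p : ℝ × ℝ => deriv f x₁ * deriv (fun y => ut p.1 y) p.2) (Ico 0 T ×ˢ univ) (0, x) :=
      (continuousWithinAt_const).mul (wxc (0, x) ⟨h0T, mem_univ _⟩)
    have h2 : 0 < deriv f x₁ * deriv (fun y => ut 0 y) x := by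
      have := hf'pos x
      rwa [← wi'] at this ⊢
    have h3 := h1.eventually (lt_mem_nhds h2)
    rw [eventually_nhdsWithin_iff] at h3
    filter_upwards [h3] with p hp hpt
    exact hp ⟨hpt, mem_univ _⟩
  rw [Metric.eventually_nhds_iff] at htube
  obtain ⟨δ, hδ, htube⟩ := htube
  obtain ⟨τ, hτ, hτε, hτδ⟩ : ∃ τ, 0 < τ ∧ τ < ε ∧ τ < δ :=
    ⟨min ε δ / 2, by have := hε.1; positivity, by
      have := hε.1
      have : 0 < min ε δ := by positivity
      linarith [min_le_left ε δ], by
      have := hε.1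
      have : 0 < min ε δ := by positivity
      linarith [min_le_right ε δ]⟩
  have hsub : ∀ {t}, t ∈ Icc 0 τ → t ∈ Ico 0 T := fun h => ⟨h.1, by linarith [h.2, hε.2]⟩
  obtain ⟨η, hη, hball⟩ := Metric.isOpen_iff.1 hω x₀ hx₀
  have hgg : ∀ x ∈ Icc x₀ x₂, 0 ≤ (b x₁ - bt x₁) * (b x - bt x) := by
    intro x hx
    rcases hsign with h | h
    · exact mul_nonneg (h x₁ hx₁) (h x hx)
    · exact mul_nonneg_of_nonpos_of_nonpos (h x₁ hx₁) (h x hx)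
  set e : ℝ := (b x₁ - bt x₁) * deriv f x₁ with he
  have hene : e ≠ 0 := mul_ne_zero (sub_ne_zero.2 hne) (hfd x₁)
  refine core_aux (fun x => 1 / 2 * sigma x ^ 2) b
    (continuous_const.mul (hKσ.continuous.pow 2)) (fun x => by have := hspos x; positivity)
    hKb.continuous x₀ x₁ τ η hx₁.1 hτ hη
    (fun t x => e * (u t x - ut t x))
    (fun t x => e * (deriv (fun s => u s x) t - deriv (fun s => ut s x) t))
    (fun t x => e * (deriv (fun y => u t y) x - deriv (fun y => ut t y) x))
    (fun t x => e * (deriv (deriv (fun y => u t y)) x - deriv (deriv (fun y => ut t y)) x))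
    ?_ ?_ ?_ ?_ ?_ ?_ ?_ ?_
  · have hss : Icc 0 τ ×ˢ Icc x₀ x₁ ⊆ Ico 0 T ×ˢ univ :=
      prod_mono (fun _ => hsub) (subset_univ _)
    exact continuousOn_const.mul ((uc.mono hss).sub (wc.mono hss))
  · exact fun t h x =>
      ((ut1 t (hsub h) x).hasDerivAt.sub (wt1 t (hsub h) x).hasDerivAt).const_mul e
  · exact fun t h x =>
      ((ux1 t (hsub h) x).hasDerivAt.sub (wx1 t (hsub h) x).hasDerivAt).const_mul e
  · exact fun t h x =>
      ((uxx1 t (hsub h) x).hasDerivAt.sub (wxx1 t (hsub h) x).hasDerivAt).const_mul e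
  · intro t h x hx
    have hx' : x ∈ Icc x₀ x₂ := ⟨hx.1, hx.2.trans hx₁.2⟩
    have h1 := htube (y := t) (by
      rw [Real.dist_eq, sub_zero, abs_of_nonneg h.1]; linarith [h.2]) x hx' (hsub h)
    have h2 := mul_nonneg (hgg x hx') h1.le
    rw [upde t (hsub h) x, wpde t (hsub h) x, he]
    linarith
  · intro x
    simp only [ui, wi, sub_self, mul_zero]
  · rw [upde 0 h0T, wpde 0 h0T]
    have h3 : e * e > 0 := mul_self_pos.2 hene
    have e1 : (fun y => u 0 y) = f := ui'
    have e2 : (fun y => ut 0 y) = f := wi'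
    rw [e1, e2]
    have : e * e = e * (1 / 2 * sigma x₁ ^ 2 * deriv (deriv f) x₁ + b x₁ * deriv f x₁ -
        (1 / 2 * sigma x₁ ^ 2 * deriv (deriv f) x₁ + bt x₁ * deriv f x₁)) := by
      rw [he]; ring
    rw [← this]; exact h3
  · intro t h x hx
    rcases h.1.eq_or_lt with h' | h'
    · simp only [← h', ui, wi, sub_self, mul_zero]
    · have : x ∈ ω := hball (by
        rw [Metric.mem_ball, Real.dist_eq, abs_lt]; constructor <;> linarith [hx.1, hx.2])
      simp only [hobs t ⟨h', by linarith [h.2]⟩ x this, sub_self, mul_zero]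
end

section
/- Let T > 0, let b : ℝ → ℝ be Lipschitz continuous, let σ and σ̃ belong to the class M with σ(x) > 0 and σ̃(x) > 0 for all x, and let f : ℝ → ℝ be of class C² with f''(x) ≠ 0 for all x ∈ ℝ. Let u be a classical solution of the parabolic equation associated with (b, σ, f) and let ũ be a classical solution of the parabolic equation associated with (b, σ̃, f), and suppose there exist ε ∈ (0, T) and a nonempty open set ω ⊂ ℝ with u = ũ on (0, ε) × ω. Let x₀ ∈ ω and x₂ > x₀ be such that σ² − σ̃² has a constant sign on [x₀, x₂] (i.e., σ² − σ̃² ≥ 0 on [x₀, x₂] or σ² − σ̃² ≤ 0 on [x₀, x₂]). Then σ(x) = σ̃(x) for all x ∈ [x₀, x₂]. -/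
open Set Filter

open Topology in
/-- Second-order necessary condition at a local minimum. -/
lemma second_deriv_nonneg_of_isLocalMin (g g' : ℝ → ℝ) (g2 x : ℝ)
    (h1 : ∀ᶠ y in 𝓝 x, HasDerivAt g (g' y) y) (h2 : HasDerivAt g' g2 x)
    (hmin : IsLocalMin g x) : 0 ≤ g2 := by
  have he : deriv g =ᶠ[𝓝 x] g' := h1.mono fun y hy => hy.deriv
  have hdd : deriv (deriv g) x = g2 := by rw [he.deriv_eq, h2.deriv]
  by_contra hneg
  push Not at hneg
  have hmax : IsLocalMax g x :=
    isLocalMax_of_deriv_deriv_neg (by rw [hdd]; exact hneg) hmin.deriv_eq_zero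
      h1.self_of_nhds.continuousAt
  have hc : g =ᶠ[𝓝 x] fun _ => g x := by
    filter_upwards [hmin, hmax] with y a1 a2 using le_antisymm a2 a1
  have hc2 : deriv g =ᶠ[𝓝 x] fun _ => (0 : ℝ) := by
    have := hc.deriv
    simpa using this
  have := hc2.deriv_eq
  simp at this
  linarith

/-- Derivative from the left at a minimum over `[0,t]` is nonpositive. -/
lemma deriv_nonpos_of_left_min (g : ℝ → ℝ) (d t : ℝ) (ht : 0 < t) (h : HasDerivAt g d t)
    (hmin : ∀ s ∈ Icc 0 t, g t ≤ g s) : d ≤ 0 := by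
  have h1 := (hasDerivAt_iff_tendsto_slope.1 h).mono_left
    (nhdsWithin_mono t (show Iio t ⊆ {t}ᶜ from fun y hy => ne_of_lt hy))
  refine le_of_tendsto h1 ?_
  filter_upwards [Ioo_mem_nhdsLT ht] with s hs
  rw [slope_def_field]
  exact div_nonpos_of_nonneg_of_nonpos (by linarith [hmin s ⟨hs.1.le, hs.2.le⟩])
    (by linarith [hs.2])

/-- A quantitative strong maximum principle on a rectangle. -/
lemma core_positivity (x0 x3 τ c B : ℝ) (hx : x0 < x3) (hτ : 0 < τ) (hc : 0 < c) (hB : 0 ≤ B)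
    (A b : ℝ → ℝ) (hA : ∀ x ∈ Icc x0 x3, c ≤ A x) (hb : ∀ x ∈ Icc x0 x3, |b x| ≤ B)
    (U Ut Ux Uxx : ℝ → ℝ → ℝ)
    (hU : ContinuousOn (fun p : ℝ × ℝ => U p.1 p.2) (Icc 0 τ ×ˢ Icc x0 x3))
    (hUt : ∀ t ∈ Ioc 0 τ, ∀ x ∈ Ioo x0 x3, HasDerivAt (fun s => U s x) (Ut t x) t)
    (hUx : ∀ t ∈ Ioc 0 τ, ∀ x ∈ Ioo x0 x3, HasDerivAt (U t) (Ux t x) x)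
    (hUxx : ∀ t ∈ Ioc 0 τ, ∀ x ∈ Ioo x0 x3, HasDerivAt (Ux t) (Uxx t x) x)
    (hpde : ∀ t ∈ Ioc 0 τ, ∀ x ∈ Ioo x0 x3, A x * Uxx t x + b x * Ux t x ≤ Ut t x)
    (h0 : ∀ x ∈ Icc x0 x3, 0 ≤ U 0 x)
    (hl : ∀ t ∈ Icc 0 τ, 0 ≤ U t x0)
    (hr : ∀ t ∈ Ioc 0 τ, 0 < U t x3) :
    ∀ y ∈ Ioo x0 x3, 0 < U τ y := by
  obtain ⟨t1, ht1, hm⟩ : ∃ t1 ∈ Icc (τ / 2) τ, IsMinOn (fun t => U t x3) (Icc (τ / 2) τ) t1 := by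
    apply isCompact_Icc.exists_isMinOn (nonempty_Icc.2 (by linarith))
    have : (fun t => U t x3) = (fun p : ℝ × ℝ => U p.1 p.2) ∘ fun t => (t, x3) := rfl
    rw [this]
    apply hU.comp (by fun_prop)
    intro t ht
    exact ⟨⟨by linarith [ht.1], ht.2⟩, hx.le, le_rfl⟩
  set m := U t1 x3 with hmdef
  have hmpos : 0 < m := hr t1 ⟨by linarith [ht1.1], ht1.2⟩
  obtain ⟨k, hk⟩ : ∃ k, k = 2 * (x3 - x0) / τ := ⟨_, rfl⟩
  have hkpos : 0 < k := by rw [hk]; apply div_pos <;> linarith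
  have hkτ : k * τ = 2 * (x3 - x0) := by rw [hk]; field_simp
  obtain ⟨l, hldef⟩ : ∃ l, l = (B + k + 1) / c := ⟨_, rfl⟩
  have hlpos : 0 < l := by rw [hldef]; positivity
  have hlc : c * l = B + k + 1 := by rw [hldef]; field_simp
  obtain ⟨δ, hδ⟩ : ∃ δ, δ = m / Real.exp (l * (x3 - x0)) := ⟨_, rfl⟩
  have hδpos : 0 < δ := by rw [hδ]; positivity
  have hδm : δ * Real.exp (l * (x3 - x0)) = m := by rw [hδ]; field_simp
  let E : ℝ → ℝ → ℝ := fun t x => Real.exp (l * ((x - x0) - k * (τ - t)))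
  have hEpos : ∀ t x, 0 < E t x := fun t x => Real.exp_pos _
  have hE1 : ∀ t x, (x - x0) - k * (τ - t) ≤ 0 → E t x ≤ 1 := fun t x h =>
    Real.exp_le_one_iff.2 (mul_nonpos_of_nonneg_of_nonpos hlpos.le h)
  have hEt : ∀ t x, HasDerivAt (fun s => E s x) (l * k * E t x) t := by
    intro t x
    have h1 : HasDerivAt (fun s : ℝ => l * ((x - x0) - k * (τ - s))) (l * k) t := by
      have := ((((hasDerivAt_id' t).const_sub τ).const_mul k).const_sub (x - x0)).const_mul l
      exact this.congr_deriv (by ring)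
    have := h1.exp
    convert this using 1
    simp only [E]; ring
  have hEx : ∀ t x, HasDerivAt (E t) (l * E t x) x := by
    intro t x
    have h1 : HasDerivAt (fun y : ℝ => l * ((y - x0) - k * (τ - t))) l x := by
      have := ((((hasDerivAt_id' x).sub_const x0)).sub_const (k * (τ - t))).const_mul l
      exact this.congr_deriv (by ring)
    have := h1.exp
    convert this using 1
    simp only [E]; ring
  let W : ℝ → ℝ → ℝ := fun t x => U t x - δ * (E t x - 1)
  have hWc : ContinuousOn (fun p : ℝ × ℝ => W p.1 p.2) (Icc 0 τ ×ˢ Icc x0 x3) := by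
    apply hU.sub
    apply Continuous.continuousOn
    simp only [E]
    fun_prop
  obtain ⟨p, hp, hpm⟩ := (isCompact_Icc.prod isCompact_Icc).exists_isMinOn
    (⟨(0, x0), ⟨le_rfl, hτ.le⟩, le_rfl, hx.le⟩ : (Icc 0 τ ×ˢ Icc x0 x3).Nonempty) hWc
  obtain ⟨t, x⟩ := p
  obtain ⟨htI, hxI⟩ := hp
  simp only at htI hxI
  have hmin : ∀ s ∈ Icc 0 τ, ∀ y ∈ Icc x0 x3, W t x ≤ W s y := fun s hs y hy =>
    hpm (show (s, y) ∈ Icc 0 τ ×ˢ Icc x0 x3 from ⟨hs, hy⟩)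
  have key : 0 ≤ W t x := by
    by_contra hneg
    push Not at hneg
    have ht0 : 0 < t := by
      rcases htI.1.eq_or_lt with h | h
      · exfalso
        subst h
        have h1 := hE1 0 x (by nlinarith [hxI.2])
        have h2 := h0 x hxI
        simp only [W] at hneg
        nlinarith
      · exact h
    have hx0 : x0 < x := by
      rcases hxI.1.eq_or_lt with h | h
      · exfalso
        subst h
        have h1 := hE1 t x0 (by nlinarith [htI.2])
        have h2 := hl t htI
        simp only [W] at hneg
        nlinarith
      · exact h
    have hx3 : x < x3 := by
      rcases hxI.2.eq_or_lt with h | h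
      · exfalso
        subst h
        simp only [W] at hneg
        rcases le_total t (τ / 2) with h2 | h2
        · have h1 := hE1 t x (by nlinarith)
          have h3 := hr t ⟨ht0, htI.2⟩
          nlinarith
        · have h3 : m ≤ U t x := hm (show t ∈ Icc (τ / 2) τ from ⟨h2, htI.2⟩)
          have h4 : E t x ≤ Real.exp (l * (x - x0)) := by
            apply Real.exp_le_exp.2
            apply mul_le_mul_of_nonneg_left _ hlpos.le
            nlinarith [htI.2]
          nlinarith
      · exact h
    have ht' : t ∈ Ioc 0 τ := ⟨ht0, htI.2⟩
    have hx' : x ∈ Ioo x0 x3 := ⟨hx0, hx3⟩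
    have hWt : HasDerivAt (fun s => W s x) (Ut t x - δ * (l * k * E t x)) t :=
      (hUt t ht' x hx').sub (((hEt t x).sub_const 1).const_mul δ)
    have hWx : ∀ y ∈ Ioo x0 x3, HasDerivAt (W t) (Ux t y - δ * (l * E t y)) y := fun y hy =>
      (hUx t ht' y hy).sub (((hEx t y).sub_const 1).const_mul δ)
    have hWxx : HasDerivAt (fun y => Ux t y - δ * (l * E t y))
        (Uxx t x - δ * (l * (l * E t x))) x :=
      (hUxx t ht' x hx').sub (((hEx t x).const_mul l).const_mul δ)
    have hloc : IsLocalMin (W t) x := by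
      filter_upwards [Ioo_mem_nhds hx0 hx3] with y hy
      exact hmin t htI y ⟨hy.1.le, hy.2.le⟩
    have e1 := hloc.hasDerivAt_eq_zero (hWx x hx')
    have e2 := second_deriv_nonneg_of_isLocalMin (W t) _ _ x
      (by filter_upwards [Ioo_mem_nhds hx0 hx3] with y hy using hWx y hy) hWxx hloc
    have e3 := deriv_nonpos_of_left_min _ _ t ht0 hWt
      fun s hs => hmin s ⟨hs.1, hs.2.trans htI.2⟩ x hxI
    have e4 := hpde t ht' x hx'
    have hAx := hA x hxI
    have hbx := neg_le_of_abs_le (hb x hxI)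
    have e5 : 1 ≤ A x * l + b x - k := by nlinarith
    have e6 : 0 < δ * l * E t x := mul_pos (mul_pos hδpos hlpos) (hEpos t x)
    have e7 : Ux t x = δ * (l * E t x) := by linarith
    rw [e7] at e4
    have e8 : 0 ≤ A x * (Uxx t x - δ * (l * (l * E t x))) := mul_nonneg (by linarith) e2
    have e9 : δ * l * E t x * 1 ≤ δ * l * E t x * (A x * l + b x - k) :=
      mul_le_mul_of_nonneg_left e5 e6.le
    nlinarith
  intro y hy
  have h1 := hmin τ ⟨hτ.le, le_rfl⟩ y ⟨hy.1.le, hy.2.le⟩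
  have h2 : 1 < E τ y := by
    apply Real.one_lt_exp_iff.2
    apply mul_pos hlpos
    linarith [hy.1]
  have h3 : 0 < δ * (E τ y - 1) := mul_pos hδpos (by linarith)
  simp only [W] at h1 key
  linarith

/-- Key step in the proof of Theorem 2: on an interval `[x₀, x₂]` (with `x₀` in the
observation set) where `σ² - σ̃²` has a constant sign, the observation forces
`σ = σ̃`. -/
theorem diffusion_uniqueness_constant_sign_interval
    (T : ℝ) (hT : 0 < T)
    (b sigma sigmat : ℝ → ℝ)
    (hbLip : ∃ K, LipschitzWith K b)
    (hs : ClassM sigma) (hst : ClassM sigmat)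
    (hspos : ∀ x, 0 < sigma x) (hstpos : ∀ x, 0 < sigmat x)
    (f : ℝ → ℝ) (hf : ContDiff ℝ 2 f) (hfdd : ∀ x, deriv (deriv f) x ≠ 0)
    (u ut : ℝ → ℝ → ℝ)
    (hu : IsClassicalSolution T b sigma f u)
    (hut : IsClassicalSolution T b sigmat f ut)
    (ε : ℝ) (hε : ε ∈ Ioo 0 T)
    (ω : Set ℝ) (hω : IsOpen ω) (hωne : ω.Nonempty)
    (hobs : ∀ t ∈ Ioo 0 ε, ∀ x ∈ ω, u t x = ut t x)
    (x₀ x₂ : ℝ) (hx₀ : x₀ ∈ ω) (hx₂ : x₀ < x₂)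
    (hsign : ConstSignOn (fun x => (sigma x) ^ 2 - (sigmat x) ^ 2) (Icc x₀ x₂)) :
    ∀ x ∈ Icc x₀ x₂, sigma x = sigmat x := by
  obtain ⟨Kb, hKb⟩ := hbLip
  obtain ⟨⟨Ks, hKs⟩, -⟩ := hs
  have hbc := hKb.continuous
  have hsc := hKs.continuous
  obtain ⟨uc, udt, udx, udxx, -, -, -, upde, u0⟩ := hu
  obtain ⟨vc, vdt, vdx, vdxx, -, -, vxxc, vpde, v0⟩ := hut
  -- signs
  obtain ⟨s1, hs1ne, hs1⟩ : ∃ s1 : ℝ, s1 ≠ 0 ∧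
      ∀ x ∈ Icc x₀ x₂, 0 ≤ s1 * ((sigma x) ^ 2 - (sigmat x) ^ 2) := by
    rcases hsign with h | h
    · exact ⟨1, by norm_num, fun x hx => by simpa using h x hx⟩
    · exact ⟨-1, by norm_num, fun x hx => by have := h x hx; simp only at this; linarith⟩
  have hfc : Continuous (deriv (deriv f)) := by
    have := hf.continuous_iteratedDeriv 2 le_rfl
    rwa [iteratedDeriv_succ, iteratedDeriv_one] at this
  obtain ⟨s2, hs2⟩ : ∃ s2 : ℝ, ∀ x, 0 < s2 * deriv (deriv f) x := by
    rcases lt_or_gt_of_ne (hfdd 0) with h0 | h0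
    · refine ⟨-1, fun x => ?_⟩
      by_contra hcon
      have hx : 0 ≤ deriv (deriv f) x := by linarith
      obtain ⟨z, hz⟩ := mem_range_of_exists_le_of_exists_ge hfc ⟨0, h0.le⟩ ⟨x, hx⟩
      exact hfdd z hz
    · refine ⟨1, fun x => ?_⟩
      by_contra hcon
      have hx : deriv (deriv f) x ≤ 0 := by linarith
      obtain ⟨z, hz⟩ := mem_range_of_exists_le_of_exists_ge hfc ⟨x, hx⟩ ⟨0, h0.le⟩
      exact hfdd z hz
  have hv0 : (fun y => ut 0 y) = f := funext v0
  have hu0 : (fun y => u 0 y) = f := funext u0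
  have h0T : (0 : ℝ) ∈ Ico 0 T := ⟨le_rfl, hT⟩
  intro x3 hx3
  by_contra hne
  have hpos3 : 0 < s1 * ((sigma x3) ^ 2 - (sigmat x3) ^ 2) := by
    refine lt_of_le_of_ne (hs1 x3 hx3) (Ne.symm (mul_ne_zero hs1ne ?_))
    intro h
    apply hne
    exact (sq_eq_sq₀ (hspos x3).le (hstpos x3).le).1 (by linarith)
  let U : ℝ → ℝ → ℝ := fun t x => s1 * s2 * (u t x - ut t x)
  let Ut : ℝ → ℝ → ℝ := fun t x =>
    s1 * s2 * (deriv (fun s => u s x) t - deriv (fun s => ut s x) t)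
  let Ux : ℝ → ℝ → ℝ := fun t x =>
    s1 * s2 * (deriv (fun y => u t y) x - deriv (fun y => ut t y) x)
  let Uxx : ℝ → ℝ → ℝ := fun t x =>
    s1 * s2 * (deriv (deriv (fun y => u t y)) x - deriv (deriv (fun y => ut t y)) x)
  have hUt : ∀ t ∈ Ico 0 T, ∀ x, HasDerivAt (fun s => U s x) (Ut t x) t := fun t ht x =>
    ((udt t ht x).hasDerivAt.sub (vdt t ht x).hasDerivAt).const_mul _
  have hUx : ∀ t ∈ Ico 0 T, ∀ x, HasDerivAt (U t) (Ux t x) x := fun t ht x =>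
    ((udx t ht x).hasDerivAt.sub (vdx t ht x).hasDerivAt).const_mul _
  have hUxx : ∀ t ∈ Ico 0 T, ∀ x, HasDerivAt (Ux t) (Uxx t x) x := fun t ht x =>
    ((udxx t ht x).hasDerivAt.sub (vdxx t ht x).hasDerivAt).const_mul _
  have hU0 : ∀ x, U 0 x = 0 := fun x => by simp [U, u0, v0]
  have hUω : ∀ t ∈ Ioo 0 ε, ∀ x ∈ ω, U t x = 0 := fun t ht x hx => by
    simp [U, hobs t ht x hx]
  have hUc : ContinuousOn (fun p : ℝ × ℝ => U p.1 p.2) (Ico 0 T ×ˢ univ) :=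
    continuousOn_const.mul (uc.sub vc)
  have hpde : ∀ t ∈ Ico 0 T, ∀ x, Ut t x = (1 / 2) * (sigma x) ^ 2 * Uxx t x + b x * Ux t x
      + (1 / 2) * ((s1 * ((sigma x) ^ 2 - (sigmat x) ^ 2)) *
        (s2 * deriv (deriv (fun y => ut t y)) x)) := by
    intro t ht x
    simp only [Ut, Ux, Uxx]
    rw [upde t ht x, vpde t ht x]
    ring
  -- positivity at `x3` for small times
  have hUt0 : 0 < Ut 0 x3 := by
    rw [hpde 0 h0T x3]
    have e1 : Uxx 0 x3 = 0 := by simp only [Uxx]; rw [hu0, hv0]; ring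
    have e2 : Ux 0 x3 = 0 := by simp only [Ux]; rw [hu0, hv0]; ring
    rw [e1, e2, hv0]
    have := mul_pos hpos3 (hs2 x3)
    linarith
  have hev1 : ∀ᶠ t in nhdsWithin (0 : ℝ) (Ioi 0), 0 < U t x3 := by
    have h1 := (hasDerivAt_iff_tendsto_slope.1 (hUt 0 h0T x3)).mono_left
      (nhdsWithin_mono 0 (show Ioi 0 ⊆ {0}ᶜ from fun y hy => ne_of_gt hy))
    filter_upwards [h1.eventually_const_lt hUt0, self_mem_nhdsWithin] with t ht ht0
    rw [slope_def_field, hU0, sub_zero, sub_zero] at ht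
    exact (div_pos_iff_of_pos_right ht0).1 ht
  have hev2 : ∀ᶠ t in nhdsWithin (0 : ℝ) (Ioi 0), ∀ y ∈ Icc x₀ x₂,
      t ∈ Ico 0 T → 0 < s2 * deriv (deriv (fun y => ut t y)) y := by
    apply nhdsWithin_le_nhds
    refine isCompact_Icc.eventually_forall_of_forall_eventually
      (P := fun t y => t ∈ Ico 0 T → 0 < s2 * deriv (deriv (fun y => ut t y)) y) ?_
    intro y hy
    have h1 := (continuousOn_const (c := s2)).mul vxxc (0, y) ⟨h0T, mem_univ _⟩
    have h2 := h1.eventually_const_lt (u := 0) (by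
      simp only [Pi.mul_apply]; rw [hv0]; exact hs2 y)
    rw [eventually_nhdsWithin_iff] at h2
    filter_upwards [h2] with z hz hzT
    exact hz ⟨hzT, mem_univ _⟩
  obtain ⟨r, hr0, hr⟩ := mem_nhdsGT_iff_exists_Ioo_subset.1 (hev1.and hev2)
  have hr0' : (0 : ℝ) < r := hr0
  obtain ⟨τ, hτ0, hτ⟩ := exists_between (lt_min hr0' hε.1)
  have hτr : τ < r := hτ.trans_le (min_le_left _ _)
  have hτε : τ < ε := hτ.trans_le (min_le_right _ _)
  have hτT : τ < T := hτε.trans hε.2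
  have hgood : ∀ t ∈ Ioc 0 τ, 0 < U t x3 ∧ ∀ y ∈ Icc x₀ x₂,
      0 < s2 * deriv (deriv (fun y => ut t y)) y := by
    intro t ht
    have := hr (show t ∈ Ioo 0 r from ⟨ht.1, ht.2.trans_lt hτr⟩)
    exact ⟨this.1, fun y hy => this.2 y hy ⟨ht.1.le, ht.2.trans_lt hτT⟩⟩
  have hlt : x₀ < x3 := by
    rcases hx3.1.eq_or_lt with h | h
    · exfalso
      have h1 := (hgood τ ⟨hτ0, le_rfl⟩).1
      rw [← h, hUω τ ⟨hτ0, hτε⟩ x₀ hx₀] at h1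
      exact lt_irrefl _ h1
    · exact h
  have hsub : Icc x₀ x3 ⊆ Icc x₀ x₂ := Icc_subset_Icc le_rfl hx3.2
  obtain ⟨z, hz, hzm⟩ := isCompact_Icc.exists_isMinOn (nonempty_Icc.2 hlt.le)
    (f := fun x => (1 / 2) * (sigma x) ^ 2) (by fun_prop)
  obtain ⟨B, hB⟩ := (isCompact_Icc (a := x₀) (b := x3)).exists_bound_of_continuousOn
    hbc.continuousOn
  have hIT : ∀ t ∈ Ioc 0 τ, t ∈ Ico 0 T := fun t ht => ⟨ht.1.le, ht.2.trans_lt hτT⟩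
  have hfin := core_positivity x₀ x3 τ ((1 / 2) * (sigma z) ^ 2) B hlt hτ0
    (by have := hspos z; positivity) ((norm_nonneg _).trans (hB x₀ ⟨le_rfl, hlt.le⟩))
    (fun x => (1 / 2) * (sigma x) ^ 2) b (fun x hx => hzm hx) (fun x hx => hB x hx)
    U Ut Ux Uxx
    (hUc.mono (prod_mono (fun t ht => ⟨ht.1, ht.2.trans_lt hτT⟩) (subset_univ _)))
    (fun t ht x _ => hUt t (hIT t ht) x) (fun t ht x _ => hUx t (hIT t ht) x)
    (fun t ht x _ => hUxx t (hIT t ht) x)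
    (fun t ht x hx => by
      have hx' := hsub ⟨hx.1.le, hx.2.le⟩
      have := mul_nonneg (hs1 x hx') ((hgood t ht).2 x hx').le
      rw [hpde t (hIT t ht) x]
      linarith)
    (fun x _ => (hU0 x).ge)
    (fun t ht => by
      rcases ht.1.eq_or_lt with h | h
      · rw [← h, hU0]
      · rw [hUω t ⟨h, ht.2.trans_lt hτε⟩ x₀ hx₀])
    (fun t ht => (hgood t ht).1)
  have hnear : ∀ᶠ y in nhdsWithin x₀ (Ioi x₀), y ∈ ω ∧ y ∈ Ioo x₀ x3 :=
    Filter.inter_mem (mem_nhdsWithin_of_mem_nhds (hω.mem_nhds hx₀)) (Ioo_mem_nhdsGT hlt)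
  obtain ⟨y, hyω, hy⟩ := hnear.exists
  have := hfin y hy
  rw [hUω τ ⟨hτ0, hτε⟩ y hyω] at this
  exact lt_irrefl _ this
end

section
/- Let T > 0 and let b, b̃, σ, σ̃ belong to the class M with σ(x) > 0 and σ̃(x) > 0 for all x. For k = 1, 2, let u_k be a classical solution of the parabolic equation associated with (b, σ, f_k) and ũ_k a classical solution of the parabolic equation associated with (b̃, σ̃, f_k), where f_k(x) = x^k. Suppose there exist ε ∈ (0, T) and a nonempty open set ω ⊂ ℝ such that u_k = ũ_k on (0, ε) × ω for k = 1, 2. Then for every x₀ ∈ ω, one has b(x) = b̃(x) and σ(x) = σ̃(x) for all x ∈ (x₀, +∞). -/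
open Set Filter

open scoped Topology

structure PD (τ : ℝ) (w wx wxx wt : ℝ → ℝ → ℝ) : Prop where
  c0 : ContinuousOn (fun p : ℝ × ℝ => w p.1 p.2) (Icc 0 τ ×ˢ univ)
  c1 : ContinuousOn (fun p : ℝ × ℝ => wx p.1 p.2) (Icc 0 τ ×ˢ univ)
  c2 : ContinuousOn (fun p : ℝ × ℝ => wxx p.1 p.2) (Icc 0 τ ×ˢ univ)
  ct : ContinuousOn (fun p : ℝ × ℝ => wt p.1 p.2) (Icc 0 τ ×ˢ univ)
  d1 : ∀ t ∈ Icc 0 τ, ∀ x, HasDerivAt (fun y => w t y) (wx t x) x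
  d2 : ∀ t ∈ Icc 0 τ, ∀ x, HasDerivAt (fun y => wx t y) (wxx t x) x
  dt : ∀ t ∈ Icc 0 τ, ∀ x, HasDerivAt (fun s => w s x) (wt t x) t
  z : ∀ x, w 0 x = 0

lemma PD.neg {τ : ℝ} {w wx wxx wt : ℝ → ℝ → ℝ} (h : PD τ w wx wxx wt) :
    PD τ (fun t x => - w t x) (fun t x => - wx t x) (fun t x => - wxx t x)
      (fun t x => - wt t x) where
  c0 := h.c0.neg
  c1 := h.c1.neg
  c2 := h.c2.neg
  ct := h.ct.neg
  d1 := fun t ht x => (h.d1 t ht x).neg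
  d2 := fun t ht x => (h.d2 t ht x).neg
  dt := fun t ht x => (h.dt t ht x).neg
  z := fun x => by simp [h.z x]

/-- truncated Laplace transform -/
noncomputable def Lap (τ s : ℝ) (w : ℝ → ℝ → ℝ) (x : ℝ) : ℝ :=
  ∫ t in (0:ℝ)..τ, Real.exp (-(s * t)) * w t x

lemma slice_cont {τ : ℝ} {w : ℝ → ℝ → ℝ}
    (h : ContinuousOn (fun p : ℝ × ℝ => w p.1 p.2) (Icc 0 τ ×ˢ univ)) (x : ℝ) :
    ContinuousOn (fun t => w t x) (Icc 0 τ) := by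
  have : ContinuousOn (fun t : ℝ => ((t, x) : ℝ × ℝ)) (Icc 0 τ) := by fun_prop
  exact h.comp this (fun t ht => ⟨ht, mem_univ _⟩)

lemma lap_cont {τ s : ℝ} {w : ℝ → ℝ → ℝ}
    (h : ContinuousOn (fun p : ℝ × ℝ => w p.1 p.2) (Icc 0 τ ×ˢ univ)) (x : ℝ) :
    ContinuousOn (fun t => Real.exp (-(s * t)) * w t x) (Icc 0 τ) :=
  ContinuousOn.mul (by fun_prop) (slice_cont h x)

lemma lap_int {τ s : ℝ} (hτ : 0 ≤ τ) {w : ℝ → ℝ → ℝ}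
    (h : ContinuousOn (fun p : ℝ × ℝ => w p.1 p.2) (Icc 0 τ ×ˢ univ)) (x : ℝ) :
    IntervalIntegrable (fun t => Real.exp (-(s * t)) * w t x) MeasureTheory.volume 0 τ := by
  apply ContinuousOn.intervalIntegrable
  rw [uIcc_of_le hτ]
  exact lap_cont h x

lemma exists_bound {τ : ℝ} {w : ℝ → ℝ → ℝ}
    (h : ContinuousOn (fun p : ℝ × ℝ => w p.1 p.2) (Icc 0 τ ×ˢ univ)) (a c : ℝ) :
    ∃ C, 0 ≤ C ∧ ∀ t ∈ Icc 0 τ, ∀ x ∈ Icc a c, |w t x| ≤ C := by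
  have hc : IsCompact (Icc 0 τ ×ˢ Icc a c) := isCompact_Icc.prod isCompact_Icc
  obtain ⟨C, hC⟩ := hc.exists_bound_of_continuousOn
    (h.mono (prod_mono le_rfl (subset_univ _)))
  exact ⟨max C 0, le_max_right _ _, fun t ht x hx => (hC (t, x) ⟨ht, hx⟩).trans (le_max_left _ _)⟩

lemma lap_hasDerivAt {τ s : ℝ} (hτ : 0 ≤ τ) (hs : 0 ≤ s) {w wx : ℝ → ℝ → ℝ}
    (h : ContinuousOn (fun p : ℝ × ℝ => w p.1 p.2) (Icc 0 τ ×ˢ univ))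
    (h1 : ContinuousOn (fun p : ℝ × ℝ => wx p.1 p.2) (Icc 0 τ ×ˢ univ))
    (hd : ∀ t ∈ Icc 0 τ, ∀ x, HasDerivAt (fun y => w t y) (wx t x) x) (x : ℝ) :
    HasDerivAt (Lap τ s w) (Lap τ s wx x) x := by
  obtain ⟨C, hC0, hC⟩ := exists_bound h1 (x - 1) (x + 1)
  have hsub : ∀ t, t ∈ uIoc 0 τ → t ∈ Icc 0 τ := by
    intro t ht
    rw [uIoc_of_le hτ] at ht
    exact ⟨ht.1.le, ht.2⟩
  refine (intervalIntegral.hasDerivAt_integral_of_dominated_loc_of_deriv_le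
    (s := Icc (x - 1) (x + 1)) (bound := fun _ => C)
    (F := fun x t => Real.exp (-(s * t)) * w t x)
    (F' := fun x t => Real.exp (-(s * t)) * wx t x)
    (Icc_mem_nhds (by linarith) (by linarith)) ?_ (lap_int hτ h x) ?_ ?_ (by simp) ?_).2
  · refine Eventually.of_forall fun y => ?_
    exact (intervalIntegrable_iff.1 (lap_int hτ h y)).aestronglyMeasurable
  · exact (intervalIntegrable_iff.1 (lap_int hτ h1 x)).aestronglyMeasurable
  · refine Eventually.of_forall fun t ht y hy => ?_
    rw [norm_mul, Real.norm_eq_abs, Real.norm_eq_abs, abs_of_pos (Real.exp_pos _)]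
    have h1 : Real.exp (-(s * t)) ≤ 1 := by
      rw [Real.exp_le_one_iff]
      have := mul_nonneg hs (hsub t ht).1
      linarith
    have h2 := hC t (hsub t ht) y hy
    calc _ ≤ 1 * C := by gcongr
      _ = C := one_mul C
  · refine Eventually.of_forall fun t ht y hy => ?_
    exact (hd t (hsub t ht) y).const_mul _

lemma lap_wt {τ s : ℝ} (hτ : 0 ≤ τ) {w wx wxx wt : ℝ → ℝ → ℝ} (h : PD τ w wx wxx wt) (x : ℝ) :
    Lap τ s wt x = Real.exp (-(s * τ)) * w τ x + s * Lap τ s w x := by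
  have hd : ∀ t ∈ uIcc 0 τ, HasDerivAt (fun t => Real.exp (-(s * t)) * w t x)
      (Real.exp (-(s * t)) * wt t x - s * (Real.exp (-(s * t)) * w t x)) t := by
    intro t ht
    rw [uIcc_of_le hτ] at ht
    have h1 : HasDerivAt (fun t => Real.exp (-(s * t))) (Real.exp (-(s * t)) * (-(s * 1))) t :=
      ((hasDerivAt_id t).const_mul s).neg.exp
    refine (h1.mul (h.dt t ht x)).congr_deriv ?_
    ring
  have hi1 := lap_int (s := s) hτ h.ct x
  have hi0 := (lap_int (s := s) hτ h.c0 x).const_mul s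
  have := intervalIntegral.integral_eq_sub_of_hasDerivAt hd (hi1.sub hi0)
  rw [intervalIntegral.integral_sub hi1 hi0, intervalIntegral.integral_const_mul, h.z x] at this
  unfold Lap
  linarith

lemma lap_abs_le {τ s : ℝ} (hτ : 0 ≤ τ) (hs : 0 ≤ s) {w : ℝ → ℝ → ℝ} {x C : ℝ}
    (h : ∀ t ∈ Icc 0 τ, |w t x| ≤ C) : |Lap τ s w x| ≤ C * τ := by
  have := intervalIntegral.norm_integral_le_of_norm_le_const (a := 0) (b := τ) (C := C)
    (f := fun t => Real.exp (-(s * t)) * w t x) ?_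
  · simpa [Lap, abs_of_nonneg hτ] using this
  · intro t ht
    rw [uIoc_of_le hτ] at ht
    have h2 := h t ⟨ht.1.le, ht.2⟩
    rw [norm_mul, Real.norm_eq_abs, Real.norm_eq_abs, abs_of_pos (Real.exp_pos _)]
    have h1 : Real.exp (-(s * t)) ≤ 1 := by
      rw [Real.exp_le_one_iff]
      have := mul_nonneg hs ht.1.le
      linarith
    calc _ ≤ 1 * C := by gcongr
      _ = C := one_mul C

/-- Laplace uniqueness lemma. -/
lemma laplace_zero {τ : ℝ} (hτ : 0 < τ) {v : ℝ → ℝ} (hv : ContinuousOn v (Icc 0 τ))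
    (hdec : ∀ θ ∈ Ioo 0 τ, Tendsto (fun s : ℝ => ∫ t in (0:ℝ)..τ, Real.exp (s * (θ - t)) * v t)
      atTop (𝓝 0)) : ∀ t ∈ Icc 0 τ, v t = 0 := by
  have hvi : IntervalIntegrable v MeasureTheory.volume 0 τ := by
    apply ContinuousOn.intervalIntegrable
    rwa [uIcc_of_le hτ.le]
  -- key: primitive vanishes
  have key : ∀ θ ∈ Ioo 0 τ, ∫ t in (0:ℝ)..θ, v t = 0 := by
    intro θ hθ
    -- the transformed integral
    let J : ℝ → ℝ := fun s => ∫ t in (0:ℝ)..τ,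
      (Real.exp (-Real.exp (s * (θ - t))) - 1) * v t
    have hJ1 : Tendsto J atTop (𝓝 (∫ t in (0:ℝ)..τ, (if t < θ then -1 else 0) * v t)) := by
      refine intervalIntegral.tendsto_integral_filter_of_dominated_convergence
        (fun t => |v t|) ?_ ?_ hvi.abs ?_
      · refine Eventually.of_forall fun s => ?_
        refine (intervalIntegrable_iff.1 ?_).aestronglyMeasurable
        exact hvi.continuousOn_mul (by fun_prop)
      · refine Eventually.of_forall fun s => Eventually.of_forall fun t _ => ?_
        rw [norm_mul, Real.norm_eq_abs, Real.norm_eq_abs]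
        have h1 : |Real.exp (-Real.exp (s * (θ - t))) - 1| ≤ 1 := by
          have h2 := Real.exp_pos (-Real.exp (s * (θ - t)))
          have h3 : Real.exp (-Real.exp (s * (θ - t))) ≤ 1 := by
            rw [Real.exp_le_one_iff]
            have := Real.exp_pos (s * (θ - t))
            linarith
          rw [abs_le]; constructor <;> linarith
        calc _ ≤ 1 * |v t| := by gcongr
          _ = _ := one_mul _
      · have hne : ∀ᵐ t : ℝ, t ≠ θ := by
          simp [MeasureTheory.ae_iff]
        filter_upwards [hne] with t ht _
        apply Tendsto.mul_const
        by_cases h : t < θ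
        · rw [if_pos h]
          have h1 : Tendsto (fun s : ℝ => Real.exp (s * (θ - t))) atTop atTop :=
            Real.tendsto_exp_atTop.comp (tendsto_id.atTop_mul_const (by linarith))
          have h2 := (Real.tendsto_exp_neg_atTop_nhds_zero.comp h1).sub_const 1
          simpa [Function.comp_def] using h2
        · rw [if_neg h]
          have hlt : θ - t < 0 := by
            rcases lt_or_gt_of_ne ht with h' | h'
            · exact absurd h' h
            · linarith
          have h1 : Tendsto (fun s : ℝ => Real.exp (s * (θ - t))) atTop (𝓝 0) :=
            Real.tendsto_exp_atBot.comp (tendsto_id.atTop_mul_const_of_neg hlt)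
          have h2 := ((Real.continuous_exp.tendsto _).comp h1.neg).sub_const 1
          simpa [Function.comp_def] using h2
    have hlim : (∫ t in (0:ℝ)..τ, (if t < θ then -1 else 0) * v t) = - ∫ t in (0:ℝ)..θ, v t := by
      have hi : IntervalIntegrable (fun t => (if t < θ then (-1:ℝ) else 0) * v t)
          MeasureTheory.volume 0 τ := by
        have e : (fun t => (if t < θ then (-1:ℝ) else 0) * v t)
            = (Iio θ).indicator (fun t => - v t) := by
          ext t
          simp [indicator_apply]
        rw [e, intervalIntegrable_iff]
        exact (intervalIntegrable_iff.1 hvi).neg.indicator measurableSet_Iio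
      have hs0 : uIcc 0 θ ⊆ uIcc 0 τ := by
        rw [uIcc_of_le hτ.le, uIcc_of_le hθ.1.le]; exact Icc_subset_Icc le_rfl hθ.2.le
      have hs1 : uIcc θ τ ⊆ uIcc 0 τ := by
        rw [uIcc_of_le hτ.le, uIcc_of_le hθ.2.le]; exact Icc_subset_Icc hθ.1.le le_rfl
      rw [← intervalIntegral.integral_add_adjacent_intervals (hi.mono_set hs0) (hi.mono_set hs1)]
      have e1 : (∫ t in (0:ℝ)..θ, (if t < θ then (-1:ℝ) else 0) * v t) = ∫ t in (0:ℝ)..θ, -v t := by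
        apply intervalIntegral.integral_congr_ae
        have hne : ∀ᵐ t : ℝ, t ≠ θ := by
          simp [MeasureTheory.ae_iff]
        filter_upwards [hne] with t ht ht2
        rw [uIoc_of_le hθ.1.le] at ht2
        rw [if_pos (lt_of_le_of_ne ht2.2 ht)]
        ring
      have e2 : (∫ t in θ..τ, (if t < θ then (-1:ℝ) else 0) * v t) = ∫ t in θ..τ, (0:ℝ) := by
        apply intervalIntegral.integral_congr
        intro t ht
        rw [uIcc_of_le hθ.2.le] at ht
        simp [not_lt.2 ht.1]
      rw [e1, e2]
      simp
    have hJ2 : Tendsto J atTop (𝓝 0) := by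
      rw [Metric.tendsto_atTop]
      intro e he
      have hd := Metric.tendsto_atTop.1 (hdec θ hθ) (e / 4) (by linarith)
      obtain ⟨N, hN⟩ := hd
      refine ⟨max N 0, fun s hs => ?_⟩
      have hs0 : 0 ≤ s := (le_max_right _ _).trans hs
      have hsN : N ≤ s := (le_max_left _ _).trans hs
      -- series
      have hsum : HasSum (fun k : ℕ => ∫ t in (0:ℝ)..τ,
          ((-Real.exp (s * (θ - t))) ^ (k + 1) / ((k + 1).factorial : ℝ)) * v t) (J s) := by
        refine intervalIntegral.hasSum_integral_of_dominated_convergence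
          (fun k t => ((Real.exp (s * θ)) ^ (k + 1) / ((k + 1).factorial : ℝ)) * |v t|) ?_ ?_ ?_ ?_ ?_
        · intro k
          refine (intervalIntegrable_iff.1 ?_).aestronglyMeasurable
          exact hvi.continuousOn_mul (by fun_prop)
        · intro k
          refine Eventually.of_forall fun t ht => ?_
          rw [uIoc_of_le hτ.le] at ht
          rw [norm_mul, norm_div, norm_pow, norm_neg, Real.norm_eq_abs, Real.norm_eq_abs,
            Real.norm_eq_abs, abs_of_pos (Real.exp_pos _), Nat.abs_cast]
          gcongr
          linarith [ht.1]
        · refine Eventually.of_forall fun t ht => ?_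
          exact (((summable_nat_add_iff 1).2 (Real.summable_pow_div_factorial _)).mul_right _)
        · have : (fun t => ∑' k : ℕ, ((Real.exp (s * θ)) ^ (k + 1) / ((k + 1).factorial : ℝ)) * |v t|)
            = fun t => (∑' k : ℕ, ((Real.exp (s * θ)) ^ (k + 1) / ((k + 1).factorial : ℝ))) * |v t| := by
            ext t; rw [tsum_mul_right]
          rw [this]
          exact hvi.abs.const_mul _
        · refine Eventually.of_forall fun t ht => ?_
          apply HasSum.mul_right
          have h1 : HasSum (fun k : ℕ => (-Real.exp (s * (θ - t))) ^ k / (k.factorial : ℝ))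
              (Real.exp (-Real.exp (s * (θ - t)))) := by
            rw [Real.exp_eq_exp_ℝ]
            exact NormedSpace.expSeries_div_hasSum_exp _
          have h2 := (hasSum_nat_add_iff' 1).2 h1
          simpa using h2
      have hb : HasSum (fun k : ℕ => (1:ℝ) / ((k + 1).factorial : ℝ) * (e / 4))
          ((Real.exp 1 - 1) * (e / 4)) := by
        apply HasSum.mul_right
        have h1 : HasSum (fun k : ℕ => (1:ℝ) ^ k / (k.factorial : ℝ)) (Real.exp 1) := by
          rw [Real.exp_eq_exp_ℝ]
          exact NormedSpace.expSeries_div_hasSum_exp _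
        have h2 := (hasSum_nat_add_iff' 1).2 h1
        simpa using h2
      have hle : ∀ k : ℕ, ‖∫ t in (0:ℝ)..τ,
          ((-Real.exp (s * (θ - t))) ^ (k + 1) / ((k + 1).factorial : ℝ)) * v t‖
          ≤ (1:ℝ) / ((k + 1).factorial : ℝ) * (e / 4) := by
        intro k
        have h1 : (∫ t in (0:ℝ)..τ,
          ((-Real.exp (s * (θ - t))) ^ (k + 1) / ((k + 1).factorial : ℝ)) * v t)
          = ((-1) ^ (k + 1) / ((k + 1).factorial : ℝ)) *
            ∫ t in (0:ℝ)..τ, Real.exp ((((k + 1 : ℕ) : ℝ) * s) * (θ - t)) * v t := by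
          rw [← intervalIntegral.integral_const_mul]
          apply intervalIntegral.integral_congr
          intro t _
          simp only
          rw [neg_pow, ← Real.exp_nat_mul]
          ring_nf
        have h2 := hN (((k + 1 : ℕ) : ℝ) * s) (by
          have : s ≤ ((k + 1 : ℕ) : ℝ) * s := by
            push_cast
            nlinarith [mul_nonneg (Nat.cast_nonneg (α := ℝ) k) hs0]
          linarith)
        rw [dist_zero_right] at h2
        rw [h1, norm_mul, norm_div, norm_pow, norm_neg, norm_one, one_pow, Real.norm_natCast]
        gcongr
      have hfin : ‖J s‖ ≤ (Real.exp 1 - 1) * (e / 4) := by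
        rw [← hsum.tsum_eq, ← hb.tsum_eq]
        exact tsum_of_norm_bounded hb hle |>.trans (le_of_eq hb.tsum_eq.symm)
      rw [dist_zero_right]
      have := Real.exp_one_lt_d9
      nlinarith
    have := tendsto_nhds_unique hJ1 hJ2
    rw [hlim] at this
    linarith
  have hvint : ∀ t ∈ Ioo 0 τ, v t = 0 := by
    intro t ht
    have h1 : HasDerivAt (fun θ => ∫ t in (0:ℝ)..θ, v t) (v t) t := by
      have hsub : uIcc 0 t ⊆ uIcc 0 τ := by
        rw [uIcc_of_le hτ.le, uIcc_of_le ht.1.le]; exact Icc_subset_Icc le_rfl ht.2.le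
      refine intervalIntegral.integral_hasDerivAt_right (hvi.mono_set hsub) ?_ ?_
      · exact ContinuousOn.stronglyMeasurableAtFilter isOpen_Ioo
          (hv.mono Ioo_subset_Icc_self) t ht
      · exact hv.continuousAt (Icc_mem_nhds ht.1 ht.2)
    have h2 : HasDerivAt (fun θ => ∫ t in (0:ℝ)..θ, v t) 0 t := by
      refine (hasDerivAt_const t (0:ℝ)).congr_of_eventuallyEq ?_
      filter_upwards [Ioo_mem_nhds ht.1 ht.2] with θ hθ using key θ hθ
    exact h1.unique h2
  have hcl : EqOn v (fun _ => 0) (closure (Ioo 0 τ)) := by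
    have := (show EqOn v (fun _ => (0:ℝ)) (Ioo 0 τ) from hvint)
    refine this.of_subset_closure (t := closure (Ioo 0 τ)) ?_ continuousOn_const subset_closure le_rfl
    rwa [closure_Ioo hτ.ne]
  rw [closure_Ioo hτ.ne] at hcl
  exact hcl


lemma decay_tendsto (C L : ℝ) {d : ℝ} (hd : 0 < d) :
    Tendsto (fun n : ℝ => C * Real.exp (-(n ^ 2 * d) + L * n)) atTop (𝓝 0) := by
  have h1 : Tendsto (fun n : ℝ => n * (L - d * n)) atTop atBot := by
    refine tendsto_id.atTop_mul_atBot₀ ?_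
    have := (tendsto_id (α := ℝ) (x := atTop)).const_mul_atTop hd
    exact tendsto_atBot_add_const_left _ L (tendsto_neg_atTop_atBot.comp this)
  have h2 := (Real.tendsto_exp_atBot.comp h1).const_mul C
  rw [mul_zero] at h2
  refine h2.congr fun n => ?_
  simp only [Function.comp]
  ring_nf

lemma lap_zero_of_bound {τ : ℝ} (hτ : 0 < τ) {w : ℝ → ℝ → ℝ} {x C L : ℝ}
    (h : ContinuousOn (fun p : ℝ × ℝ => w p.1 p.2) (Icc 0 τ ×ˢ univ))
    (hb : ∀ n : ℝ, 1 ≤ n → |Lap τ (n ^ 2) w x| ≤ C * Real.exp (-(n ^ 2 * τ) + L * n)) :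
    ∀ t ∈ Icc 0 τ, w t x = 0 := by
  refine laplace_zero hτ (slice_cont h x) ?_
  intro θ hθ
  have h1 := (decay_tendsto C L (sub_pos.2 hθ.2)).comp Real.tendsto_sqrt_atTop
  refine squeeze_zero_norm' ?_ h1
  filter_upwards [eventually_ge_atTop 1] with s hs
  have hs1 : 1 ≤ √s := Real.one_le_sqrt.2 hs
  have hs2 : √s ^ 2 = s := Real.sq_sqrt (by linarith)
  have h3 := hb _ hs1
  rw [hs2] at h3
  have h4 : (∫ t in (0:ℝ)..τ, Real.exp (s * (θ - t)) * w t x)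
      = Real.exp (s * θ) * Lap τ s w x := by
    unfold Lap
    rw [← intervalIntegral.integral_const_mul]
    apply intervalIntegral.integral_congr
    intro t _
    simp only
    rw [← mul_assoc, ← Real.exp_add]
    ring_nf
  rw [h4, norm_mul, Real.norm_eq_abs, Real.norm_eq_abs, abs_of_pos (Real.exp_pos _)]
  calc Real.exp (s * θ) * |Lap τ s w x|
      ≤ Real.exp (s * θ) * (C * Real.exp (-(s * τ) + L * √s)) := by gcongr
    _ = C * (Real.exp (s * θ) * Real.exp (-(s * τ) + L * √s)) := by ring
    _ = C * Real.exp (-(√s ^ 2 * (τ - θ)) + L * √s) := by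
      rw [← Real.exp_add, hs2]; ring_nf
    _ = _ := rfl

lemma lap_eq {τ s x A B : ℝ} (hτ : 0 ≤ τ) {w wx wxx wt g : ℝ → ℝ → ℝ} (h : PD τ w wx wxx wt)
    (hg : ContinuousOn (fun t => g t x) (Icc 0 τ))
    (heq : ∀ t ∈ Icc 0 τ, wt t x = A * wxx t x + B * wx t x + g t x) :
    Real.exp (-(s * τ)) * w τ x + s * Lap τ s w x
      = A * Lap τ s wxx x + B * Lap τ s wx x + Lap τ s g x := by
  rw [← lap_wt hτ h]
  unfold Lap
  have i2 := lap_int (s := s) hτ h.c2 x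
  have i1 := lap_int (s := s) hτ h.c1 x
  have i0 : IntervalIntegrable (fun t => Real.exp (-(s * t)) * g t x) MeasureTheory.volume 0 τ := by
    apply ContinuousOn.intervalIntegrable
    rw [uIcc_of_le hτ]
    exact ContinuousOn.mul (by fun_prop) hg
  rw [← intervalIntegral.integral_const_mul, ← intervalIntegral.integral_const_mul,
    ← intervalIntegral.integral_add (i2.const_mul A) (i1.const_mul B),
    ← intervalIntegral.integral_add ((i2.const_mul A).add (i1.const_mul B)) i0]
  apply intervalIntegral.integral_congr
  intro t ht
  rw [uIcc_of_le hτ] at ht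
  simp only
  rw [heq t ht]
  ring

lemma abs_bound {f : ℝ → ℝ} (hf : Continuous f) (a c : ℝ) :
    ∃ P, 0 ≤ P ∧ ∀ x ∈ Icc a c, |f x| ≤ P := by
  obtain ⟨C, hC⟩ := (isCompact_Icc (a := a) (b := c)).exists_bound_of_continuousOn hf.continuousOn
  exact ⟨max C 0, le_max_right _ _, fun x hx => (hC x hx).trans (le_max_left _ _)⟩

/-- Unique continuation from lateral Cauchy data. -/
lemma unique_cont {τ a c : ℝ} (hτ : 0 < τ) (hac : a ≤ c) {w wx wxx wt : ℝ → ℝ → ℝ}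
    (h : PD τ w wx wxx wt) {A B : ℝ → ℝ} (hA : Continuous A) (hB : Continuous B)
    (hApos : ∀ x, 0 < A x)
    (heq : ∀ t ∈ Icc 0 τ, ∀ x ∈ Ico a c, wt t x = A x * wxx t x + B x * wx t x)
    (ha0 : ∀ t ∈ Icc 0 τ, w t a = 0) (ha1 : ∀ t ∈ Icc 0 τ, wx t a = 0) :
    (∀ t ∈ Icc 0 τ, w t c = 0) ∧ (∀ t ∈ Icc 0 τ, wx t c = 0) := by
  obtain ⟨P, hP0, hP⟩ := abs_bound (f := fun x => (A x)⁻¹)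
    (hA.inv₀ (fun x => (hApos x).ne')) a c
  obtain ⟨Q, hQ0, hQ⟩ := abs_bound (f := fun x => B x * (A x)⁻¹)
    (hB.mul (hA.inv₀ (fun x => (hApos x).ne'))) a c
  obtain ⟨H, hH0, hH⟩ := exists_bound h.c0 a c
  have hz : ∀ (s : ℝ) (f : ℝ → ℝ → ℝ), (∀ t ∈ Icc 0 τ, f t a = 0) → Lap τ s f a = 0 := by
    intro s f hf
    unfold Lap
    apply intervalIntegral.integral_zero_ae
    refine Eventually.of_forall fun t ht => ?_
    rw [uIoc_of_le hτ.le] at ht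
    simp [hf t ⟨ht.1.le, ht.2⟩]
  have main : ∀ n : ℝ, 1 ≤ n → ‖((n * Lap τ (n ^ 2) w c, Lap τ (n ^ 2) wx c) : ℝ × ℝ)‖
      ≤ (P * H) * Real.exp (-(n ^ 2 * τ) + ((1 + P + Q) * (c - a)) * n) := by
    intro n hn
    have hn2 : (0:ℝ) ≤ n ^ 2 := by positivity
    have dW := lap_hasDerivAt hτ.le hn2 h.c0 h.c1 h.d1
    have dW1 := lap_hasDerivAt hτ.le hn2 h.c1 h.c2 h.d2
    have dY : ∀ x, HasDerivAt (fun x => ((n * Lap τ (n ^ 2) w x, Lap τ (n ^ 2) wx x) : ℝ × ℝ))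
        (n * Lap τ (n ^ 2) wx x, Lap τ (n ^ 2) wxx x) x :=
      fun x => ((dW x).const_mul n).prodMk (dW1 x)
    have hE : 0 < Real.exp (-(n ^ 2 * τ)) := Real.exp_pos _
    have gr := norm_le_gronwallBound_of_norm_deriv_right_le (a := a) (b := c) (δ := 0)
      (K := (1 + P + Q) * n) (ε := P * H * Real.exp (-(n ^ 2 * τ)))
      (fun x _ => (dY x).continuousAt.continuousWithinAt)
      (fun x _ => (dY x).hasDerivWithinAt)
      (by simp [hz _ w ha0, hz _ wx ha1])
      (by
        intro x hx
        have hxc : x ∈ Icc a c := ⟨hx.1, hx.2.le⟩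
        have e := lap_eq (s := n ^ 2) (g := fun _ _ => 0) hτ.le h continuousOn_const
          (fun t ht => by rw [heq t ht x hx, add_zero])
        have e0 : Lap τ (n ^ 2) (fun _ _ => 0) x = 0 := by simp [Lap]
        rw [e0] at e
        set Y := ‖((n * Lap τ (n ^ 2) w x, Lap τ (n ^ 2) wx x) : ℝ × ℝ)‖ with hY
        have hY0 : 0 ≤ Y := norm_nonneg _
        have y1 : |n * Lap τ (n ^ 2) w x| ≤ Y :=
          norm_fst_le ((n * Lap τ (n ^ 2) w x, Lap τ (n ^ 2) wx x) : ℝ × ℝ)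
        have y2 : |Lap τ (n ^ 2) wx x| ≤ Y :=
          norm_snd_le ((n * Lap τ (n ^ 2) w x, Lap τ (n ^ 2) wx x) : ℝ × ℝ)
        have hp := hP x hxc
        have hq := hQ x hxc
        have hh := hH τ ⟨hτ.le, le_rfl⟩ x hxc
        have ex : Lap τ (n ^ 2) wxx x = (A x)⁻¹ * (n * (n * Lap τ (n ^ 2) w x))
            + (A x)⁻¹ * (Real.exp (-(n ^ 2 * τ)) * w τ x) - B x * (A x)⁻¹ * Lap τ (n ^ 2) wx x := by
          have := (hApos x).ne'
          field_simp
          linarith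
        have hYn : Y ≤ n * Y := le_mul_of_one_le_left hY0 hn
        have b1 : |(A x)⁻¹ * (n * (n * Lap τ (n ^ 2) w x))| ≤ P * (n * Y) := by
          rw [abs_mul, abs_mul n, abs_of_nonneg (by linarith : 0 ≤ n)]
          gcongr
        have b2 : |(A x)⁻¹ * (Real.exp (-(n ^ 2 * τ)) * w τ x)|
            ≤ P * (Real.exp (-(n ^ 2 * τ)) * H) := by
          rw [abs_mul, abs_mul (Real.exp _), abs_of_pos hE]
          gcongr
        have b3 : |B x * (A x)⁻¹ * Lap τ (n ^ 2) wx x| ≤ Q * (n * Y) := by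
          rw [abs_mul]
          have := y2.trans hYn
          gcongr
        rw [Prod.norm_mk, max_le_iff]
        constructor
        · rw [Real.norm_eq_abs, abs_mul, abs_of_nonneg (by linarith : 0 ≤ n)]
          have : n * |Lap τ (n ^ 2) wx x| ≤ n * Y := by gcongr
          have h3 : 0 ≤ P * H * Real.exp (-(n ^ 2 * τ)) := by positivity
          have h4 : 0 ≤ P * (n * Y) := by positivity
          have h5 : 0 ≤ Q * (n * Y) := by positivity
          nlinarith
        · rw [Real.norm_eq_abs, ex]
          have hnY : 0 ≤ n * Y := by positivity
          have t1 := abs_sub ((A x)⁻¹ * (n * (n * Lap τ (n ^ 2) w x))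
            + (A x)⁻¹ * (Real.exp (-(n ^ 2 * τ)) * w τ x)) (B x * (A x)⁻¹ * Lap τ (n ^ 2) wx x)
          have t2 := abs_add_le ((A x)⁻¹ * (n * (n * Lap τ (n ^ 2) w x)))
            ((A x)⁻¹ * (Real.exp (-(n ^ 2 * τ)) * w τ x))
          nlinarith)
      c ⟨hac, le_rfl⟩
    refine gr.trans ?_
    have hK1 : 1 ≤ (1 + P + Q) * n := by nlinarith
    rw [gronwallBound_of_K_ne_0 (by linarith)]
    have hPH : 0 ≤ P * H * Real.exp (-(n ^ 2 * τ)) := by positivity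
    have hdiv : P * H * Real.exp (-(n ^ 2 * τ)) / ((1 + P + Q) * n)
        ≤ P * H * Real.exp (-(n ^ 2 * τ)) := div_le_self hPH hK1
    have hc : 0 ≤ Real.exp ((1 + P + Q) * n * (c - a)) - 1 := by
      rw [sub_nonneg, Real.one_le_exp_iff]
      have : 0 ≤ c - a := by linarith
      positivity
    calc _ ≤ 0 + P * H * Real.exp (-(n ^ 2 * τ)) * (Real.exp ((1 + P + Q) * n * (c - a)) - 1) := by
          simp only [zero_mul]; gcongr
      _ ≤ P * H * Real.exp (-(n ^ 2 * τ)) * Real.exp ((1 + P + Q) * n * (c - a)) := by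
          linarith
      _ = _ := by
          rw [mul_assoc, ← Real.exp_add]; ring_nf
  constructor
  · refine lap_zero_of_bound hτ h.c0 (fun n hn => le_trans ?_ (main n hn))
    have : |n * Lap τ (n ^ 2) w c| ≤ _ := norm_fst_le ((n * Lap τ (n ^ 2) w c, Lap τ (n ^ 2) wx c) : ℝ × ℝ)
    refine le_trans ?_ this
    rw [abs_mul, abs_of_nonneg (by linarith : 0 ≤ n)]
    exact le_mul_of_one_le_left (abs_nonneg _) hn
  · exact lap_zero_of_bound hτ h.c1 (fun n hn => le_trans
      (norm_snd_le ((n * Lap τ (n ^ 2) w c, Lap τ (n ^ 2) wx c) : ℝ × ℝ)) (main n hn))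

lemma comparison {a c s : ℝ} (hac : a ≤ c) (hs : 0 ≤ s) {D D1 D2 A B : ℝ → ℝ}
    (hA : ∀ x, 0 < A x)
    (d1 : ∀ x, HasDerivAt D (D1 x) x) (d2 : ∀ x, HasDerivAt D1 (D2 x) x)
    (h0 : 0 < D a) (h1 : 0 < D1 a)
    (hin : ∀ x ∈ Icc a c, 0 < A x * D2 x + B x * D1 x - s * D x) : 0 < D c := by
  have cD : Continuous D := continuous_iff_continuousAt.2 fun x => (d1 x).continuousAt
  have cD1 : Continuous D1 := continuous_iff_continuousAt.2 fun x => (d2 x).continuousAt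
  have mono : ∀ z ∈ Icc a c, (∀ x ∈ Ico a z, 0 < D1 x) → 0 < D z := by
    intro z hz hp
    have : MonotoneOn D (Icc a z) := by
      apply monotoneOn_of_deriv_nonneg (convex_Icc a z) cD.continuousOn
      · exact fun x _ => (d1 x).differentiableAt.differentiableWithinAt
      · intro x hx
        rw [interior_Icc] at hx
        rw [(d1 x).deriv]
        exact (hp x ⟨hx.1.le, hx.2⟩).le
    exact h0.trans_le (this ⟨le_rfl, hz.1⟩ ⟨hz.1, le_rfl⟩ hz.1)
  by_cases hall : ∀ x ∈ Ico a c, 0 < D1 x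
  · exact mono c ⟨hac, le_rfl⟩ hall
  exfalso
  push Not at hall
  obtain ⟨x₀, hx₀, hx₀'⟩ := hall
  have hcomp : IsCompact (Icc a c ∩ {x | D1 x ≤ 0}) :=
    isCompact_Icc.inter_right (isClosed_le cD1 continuous_const)
  obtain ⟨z, hz⟩ := hcomp.exists_isLeast ⟨x₀, ⟨hx₀.1, hx₀.2.le⟩, hx₀'⟩
  have hzI := hz.1.1
  have hz0 : D1 z ≤ 0 := hz.1.2
  have hlt : ∀ x ∈ Ico a z, 0 < D1 x := by
    intro x hx
    by_contra hc
    exact absurd (hz.2 ⟨⟨hx.1, hx.2.le.trans hzI.2⟩, not_lt.1 hc⟩) (not_le.2 hx.2)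
  have haz : a < z := by
    rcases hzI.1.lt_or_eq with h | h
    · exact h
    · rw [← h] at hz0; linarith
  have hev : ∀ᶠ x in 𝓝[<] z, 0 < D1 x := by
    filter_upwards [Ioo_mem_nhdsLT haz] with x hx using hlt x ⟨hx.1.le, hx.2⟩
  have hz1 : 0 ≤ D1 z := ge_of_tendsto (cD1.continuousAt.continuousWithinAt (s := Iio z))
    (hev.mono fun x hx => hx.le)
  have hzz : D1 z = 0 := le_antisymm hz0 hz1
  have hD := mono z hzI hlt
  have hi := hin z hzI
  rw [hzz] at hi
  have hD2 : 0 < D2 z := by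
    have : 0 < A z * D2 z := by nlinarith
    exact pos_of_mul_pos_right this (hA z).le
  have hsl := (hasDerivWithinAt_iff_tendsto_slope' (by simp)).1 ((d2 z).hasDerivWithinAt (s := Iio z))
  have : D2 z ≤ 0 := by
    refine le_of_tendsto hsl ?_
    filter_upwards [hev, self_mem_nhdsWithin] with x hx hxz
    rw [slope_def_field, hzz]
    apply div_nonpos_of_nonneg_of_nonpos
    · linarith
    · have : x < z := hxz
      linarith
  linarith


set_option maxHeartbeats 1000000 in
lemma barrier (A1 B1 c1 : ℝ) (m : ℕ) (hA1 : 0 ≤ A1) (hB1 : 0 ≤ B1) (hc1 : 0 < c1) :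
    ∃ c2 μ : ℝ, 0 < c2 ∧ 0 < μ ∧ ∀ n z A B : ℝ, 1 ≤ n → 0 ≤ z → z ≤ 1 → 0 < A → A ≤ A1 → |B| ≤ B1 →
      A * (c2 / n ^ 2 * Real.exp (μ * n * z) * ((m + 2) * (m + 1) * z ^ m
          + 2 * (m + 2) * (μ * n) * z ^ (m + 1) + (μ * n) ^ 2 * z ^ (m + 2)))
        + B * (c2 / n ^ 2 * Real.exp (μ * n * z) * ((m + 2) * z ^ (m + 1) + μ * n * z ^ (m + 2)))
        - n ^ 2 * (c2 / n ^ 2 * Real.exp (μ * n * z) * z ^ (m + 2)) ≤ c1 * z ^ m / n ^ 2 := by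
  obtain ⟨M, hM⟩ : ∃ r : ℝ, r = (m:ℝ) + 2 := ⟨_, rfl⟩
  rw [← hM]
  have hM0 : 0 ≤ M := by rw [hM]; positivity
  obtain ⟨μ, hμ⟩ : ∃ r : ℝ, r = 1 / (2 * (A1 + B1 + 1)) := ⟨_, rfl⟩
  have hμ0 : 0 < μ := by rw [hμ]; positivity
  have hμ1 : (A1 + B1 + 1) * μ = 1 / 2 := by rw [hμ]; field_simp
  have hμ2 : μ ≤ 1 / 2 := by nlinarith
  have hμ3 : A1 * μ ^ 2 + B1 * μ ≤ 1 / 2 := by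
    have : A1 * μ ^ 2 ≤ A1 * μ := by
      have : μ ^ 2 ≤ μ := by nlinarith
      gcongr
    nlinarith
  obtain ⟨P, hP⟩ : ∃ r : ℝ, r = A1 * (M * (m + 1)) := ⟨_, rfl⟩
  obtain ⟨Q, hQ⟩ : ∃ r : ℝ, r = 2 * M * μ * A1 + B1 * M := ⟨_, rfl⟩
  have hP0 : 0 ≤ P := by rw [hP]; positivity
  have hQ0 : 0 ≤ Q := by rw [hQ]; positivity
  obtain ⟨R, hR⟩ : ∃ r : ℝ, r = 2 * (P + Q) + 1 := ⟨_, rfl⟩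
  have hR0 : 0 ≤ R := by rw [hR]; positivity
  obtain ⟨E, hE⟩ : ∃ r : ℝ, r = Real.exp R * (P + Q * R) + 1 := ⟨_, rfl⟩
  have hE0 : 0 < E := by rw [hE]; positivity
  refine ⟨c1 / E, μ, by positivity, hμ0, ?_⟩
  intro n z A B hn hz hz1 hA hAA hB
  obtain ⟨ξ, hξ⟩ : ∃ r : ℝ, r = n * z := ⟨_, rfl⟩
  have hξ0 : 0 ≤ ξ := by rw [hξ]; positivity
  have hzξ : z ≤ ξ := hξ ▸ le_mul_of_one_le_left hz hn
  obtain ⟨Br, hBr⟩ : ∃ r : ℝ, r = A * (M * (m + 1) + 2 * M * μ * ξ + μ ^ 2 * ξ ^ 2)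
    + B * (M * z + μ * (n * z ^ 2)) - ξ ^ 2 := ⟨_, rfl⟩
  have hBr1 : Br ≤ P + Q * ξ - ξ ^ 2 / 2 := by
    have t1 : A * (M * (m + 1) + 2 * M * μ * ξ + μ ^ 2 * ξ ^ 2)
        ≤ A1 * (M * (m + 1) + 2 * M * μ * ξ + μ ^ 2 * ξ ^ 2) := by gcongr
    have t2 : B * (M * z + μ * (n * z ^ 2)) ≤ B1 * (M * ξ + μ * ξ ^ 2) := by
      have : n * z ^ 2 ≤ ξ ^ 2 := by
        rw [hξ]
        have : n ≤ n ^ 2 := by nlinarith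
        calc n * z ^ 2 ≤ n ^ 2 * z ^ 2 := by gcongr
          _ = _ := by ring
      have hB' : B ≤ B1 := (le_abs_self B).trans hB
      calc B * (M * z + μ * (n * z ^ 2)) ≤ B1 * (M * z + μ * (n * z ^ 2)) := by gcongr
        _ ≤ _ := by gcongr
    have t3 : (A1 * μ ^ 2 + B1 * μ) * ξ ^ 2 ≤ 1 / 2 * ξ ^ 2 := by gcongr
    rw [hBr, hP, hQ]
    linarith
  have hmain : Real.exp (μ * ξ) * Br ≤ E := by
    rcases le_total R ξ with h | h
    · have : Br ≤ 0 := by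
        refine hBr1.trans ?_
        have h1 : 1 ≤ ξ := by linarith
        nlinarith
      have := mul_nonpos_of_nonneg_of_nonpos (Real.exp_pos (μ * ξ)).le this
      linarith
    · have h1 : Br ≤ P + Q * R := by
        have h5 : Q * ξ ≤ Q * R := by gcongr
        have h6 := sq_nonneg ξ
        linarith
      have h2 : Real.exp (μ * ξ) ≤ Real.exp R := by
        apply Real.exp_le_exp.2
        have h5 : μ * ξ ≤ 1 * ξ := by
          have : μ ≤ 1 := by linarith
          gcongr
        linarith
      calc Real.exp (μ * ξ) * Br ≤ Real.exp (μ * ξ) * (P + Q * R) := by gcongr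
        _ ≤ Real.exp R * (P + Q * R) := by gcongr
        _ ≤ E := by linarith
  have e1 : μ * n * z = μ * ξ := by rw [hξ]; ring
  calc _ = (c1 / E) / n ^ 2 * z ^ m * (Real.exp (μ * ξ) * Br) := by
        rw [e1, hBr, hξ]; ring
    _ ≤ (c1 / E) / n ^ 2 * z ^ m * E := by gcongr
    _ = _ := by field_simp

lemma q_arith {n P A B B1 K : ℝ} (hn : 1 ≤ n) (hP0 : 0 ≤ P) (hA : 0 < A) (hB : -B1 ≤ B)
    (hAP : 1 ≤ A * P) (hB10 : 0 ≤ B1) (hK : K = (B1 + 2) * P + 1) :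
    1 ≤ A * (K * n) ^ 2 + B * (K * n) - n ^ 2 := by
  have hK1 : 1 ≤ K := by
    have : 0 ≤ (B1 + 2) * P := by positivity
    linarith
  have hn2 : 1 ≤ n ^ 2 := by nlinarith
  have hAK : B1 + 2 ≤ A * K := by
    have : (B1 + 2) * 1 ≤ (B1 + 2) * (A * P) := by gcongr
    rw [hK]
    linarith
  have h1 : (B1 + 2) * (K * n ^ 2) ≤ (A * K) * (K * n ^ 2) := by gcongr
  have h2 : -B1 * (K * n) ≤ B * (K * n) := by gcongr
  have h3 : B1 * (K * n) ≤ B1 * (K * n ^ 2) := by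
    have : n ≤ n ^ 2 := by nlinarith
    gcongr
  have h4 : n ^ 2 ≤ K * n ^ 2 := le_mul_of_one_le_left (by linarith) hK1
  linarith

lemma lap_lower {τ s x c : ℝ} (hτ : 0 < τ) (hs : 1 ≤ s) (hc : 0 ≤ c) {g : ℝ → ℝ → ℝ}
    (hg : ContinuousOn (fun t => g t x) (Icc 0 τ)) (hgl : ∀ t ∈ Icc 0 τ, c ≤ g t x) :
    c * (1 - Real.exp (-τ)) / s ≤ Lap τ s g x := by
  have hs0 : s ≠ 0 := by linarith
  have hi : (∫ t in (0:ℝ)..τ, Real.exp (-(s * t)) * c) = c * (1 - Real.exp (-(s * τ))) / s := by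
    have hd : ∀ t ∈ uIcc 0 τ, HasDerivAt (fun t => -(Real.exp (-(s * t)) * c / s))
        (Real.exp (-(s * t)) * c) t := by
      intro t _
      have h1 : HasDerivAt (fun t => Real.exp (-(s * t))) (Real.exp (-(s * t)) * (-(s * 1))) t :=
        ((hasDerivAt_id t).const_mul s).neg.exp
      refine (((h1.mul_const c).div_const s).neg).congr_deriv ?_
      field_simp
    rw [intervalIntegral.integral_eq_sub_of_hasDerivAt hd
      (Continuous.intervalIntegrable (by fun_prop) _ _)]
    simp
    ring
  have h2 : (∫ t in (0:ℝ)..τ, Real.exp (-(s * t)) * c) ≤ Lap τ s g x := by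
    refine intervalIntegral.integral_mono_on hτ.le
      (Continuous.intervalIntegrable (by fun_prop) _ _) ?_ ?_
    · apply ContinuousOn.intervalIntegrable
      rw [uIcc_of_le hτ.le]
      exact ContinuousOn.mul (by fun_prop) hg
    · intro t ht
      have := hgl t ht
      gcongr
  refine le_trans ?_ h2
  rw [hi]
  gcongr
  nlinarith

lemma strict_contra {τ a y c : ℝ} {m : ℕ} (hτ : 0 < τ) (hy : 0 < y) (hy1 : y ≤ 1) (hc : 0 < c)
    {w wx wxx wt g : ℝ → ℝ → ℝ}
    (h : PD τ w wx wxx wt) {A B : ℝ → ℝ} (hA : Continuous A) (hB : Continuous B)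
    (hApos : ∀ x, 0 < A x)
    (hg : ∀ x ∈ Icc a (a + y), ContinuousOn (fun t => g t x) (Icc 0 τ))
    (heq : ∀ t ∈ Icc 0 τ, ∀ x ∈ Icc a (a + y), wt t x = A x * wxx t x + B x * wx t x + g t x)
    (ha0 : ∀ t ∈ Icc 0 τ, w t a = 0) (ha1 : ∀ t ∈ Icc 0 τ, wx t a = 0)
    (hgl : ∀ t ∈ Icc 0 τ, ∀ x ∈ Icc a (a + y), c * (x - a) ^ m ≤ g t x) : False := by
  obtain ⟨A1, hA10, hA1⟩ := abs_bound hA a (a + y)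
  obtain ⟨B1, hB10, hB1⟩ := abs_bound hB a (a + y)
  obtain ⟨P, hP0, hP⟩ := abs_bound (f := fun x => (A x)⁻¹)
    (hA.inv₀ (fun x => (hApos x).ne')) a (a + y)
  obtain ⟨H, hH0, hH⟩ := exists_bound h.c0 a (a + y)
  have hexpτ : Real.exp (-τ) < 1 := by rw [Real.exp_lt_one_iff]; linarith
  obtain ⟨c2, μ, hc2, hμ, hbar⟩ := barrier A1 B1 (c * (1 - Real.exp (-τ))) m hA10 hB10
    (mul_pos hc (by linarith))
  have hz : ∀ (s : ℝ) (f : ℝ → ℝ → ℝ), (∀ t ∈ Icc 0 τ, f t a = 0) → Lap τ s f a = 0 := by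
    intro s f hf
    unfold Lap
    apply intervalIntegral.integral_zero_ae
    refine Eventually.of_forall fun t ht => ?_
    rw [uIoc_of_le hτ.le] at ht
    simp [hf t ⟨ht.1.le, ht.2⟩]
  -- exponent of the correction
  set K : ℝ := (B1 + 2) * P + 1 with hK
  have hK1 : 1 ≤ K := by
    have : 0 ≤ (B1 + 2) * P := by positivity
    linarith
  have key : ∀ n : ℝ, 1 ≤ n → c2 / n ^ 2 * Real.exp (μ * n * y) * y ^ (m + 2)
      < H * τ + (H + 1) * Real.exp (-(n ^ 2 * τ) + (K * y) * n) := by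
    intro n hn
    have hn2 : (0:ℝ) ≤ n ^ 2 := by positivity
    have hn21 : (1:ℝ) ≤ n ^ 2 := by nlinarith
    have dW := lap_hasDerivAt hτ.le hn2 h.c0 h.c1 h.d1
    have dW1 := lap_hasDerivAt hτ.le hn2 h.c1 h.c2 h.d2
    set E := Real.exp (-(n ^ 2 * τ)) with hE
    have hE0 : 0 < E := Real.exp_pos _
    set δ := (H + 1) * E with hδ
    have hδ0 : 0 < δ := by positivity
    have dexp : ∀ ν x : ℝ, HasDerivAt (fun x => Real.exp (ν * (x - a)))
        (ν * Real.exp (ν * (x - a))) x := by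
      intro ν x
      refine ((((hasDerivAt_id x).sub_const a).const_mul ν).exp).congr_deriv ?_
      simp only [id]
      ring
    have dpow : ∀ (k : ℕ) (x : ℝ), HasDerivAt (fun x => (x - a) ^ (k + 1))
        (((k : ℝ) + 1) * (x - a) ^ k) x := by
      intro k x
      refine (((hasDerivAt_id x).sub_const a).pow (k + 1)).congr_deriv ?_
      simp
    have dp : ∀ x, HasDerivAt
        (fun x => c2 / n ^ 2 * Real.exp (μ * n * (x - a)) * (x - a) ^ (m + 2))
        (c2 / n ^ 2 * Real.exp (μ * n * (x - a)) *
          ((m + 2) * (x - a) ^ (m + 1) + μ * n * (x - a) ^ (m + 2))) x := by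
      intro x
      refine (((dexp (μ * n) x).const_mul (c2 / n ^ 2)).mul (dpow (m + 1) x)).congr_deriv ?_
      push_cast
      ring
    have dp1 : ∀ x, HasDerivAt
        (fun x => c2 / n ^ 2 * Real.exp (μ * n * (x - a)) *
          ((m + 2) * (x - a) ^ (m + 1) + μ * n * (x - a) ^ (m + 2)))
        (c2 / n ^ 2 * Real.exp (μ * n * (x - a)) * ((m + 2) * (m + 1) * (x - a) ^ m
          + 2 * (m + 2) * (μ * n) * (x - a) ^ (m + 1) + (μ * n) ^ 2 * (x - a) ^ (m + 2))) x := by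
      intro x
      refine (((dexp (μ * n) x).const_mul (c2 / n ^ 2)).mul
        (((dpow m x).const_mul ((m:ℝ) + 2)).fun_add ((dpow (m + 1) x).const_mul (μ * n)))).congr_deriv ?_
      push_cast
      ring
    have dq : ∀ x, HasDerivAt (fun x => δ * Real.exp (K * n * (x - a)))
        (δ * (K * n * Real.exp (K * n * (x - a)))) x := fun x => (dexp (K * n) x).const_mul δ
    have dq1 : ∀ x, HasDerivAt (fun x => δ * (K * n * Real.exp (K * n * (x - a))))
        (δ * (K * n * (K * n * Real.exp (K * n * (x - a))))) x :=
      fun x => ((dexp (K * n) x).const_mul (K * n)).const_mul δ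
    have hcmp := comparison (a := a) (c := a + y) (s := n ^ 2) (B := B) (by linarith) hn2 hApos
      (fun x => ((dW x).neg.sub (dp x)).add (dq x))
      (fun x => ((dW1 x).neg.sub (dp1 x)).add (dq1 x))
      (by simp [hz _ w ha0, hδ0])
      (by simp [hz _ wx ha1]; positivity)
      (by
        intro x hx
        have e := lap_eq (s := n ^ 2) (g := g) hτ.le h (hg x hx)
          (fun t ht => heq t ht x hx)
        have lo := lap_lower (s := n ^ 2) (c := c * (x - a) ^ m) hτ hn21
          (mul_nonneg hc.le (pow_nonneg (by linarith [hx.1]) _)) (hg x hx)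
          (fun t ht => hgl t ht x hx)
        have hz0 : 0 ≤ x - a := by linarith [hx.1]
        have bb := hbar n (x - a) (A x) (B x) hn hz0 (by linarith [hx.2]) (hApos x)
          ((le_abs_self _).trans (hA1 x hx)) (hB1 x hx)
        have hh := (abs_le.1 (hH τ ⟨hτ.le, le_rfl⟩ x hx)).2
        have hEh : E * w τ x ≤ E * H := by gcongr
        have eX : 1 ≤ Real.exp (K * n * (x - a)) := by
          rw [Real.one_le_exp_iff]; positivity
        have hBx := (abs_le.1 (hB1 x hx)).1
        have hAP : 1 ≤ A x * P := by
          have h1 := (le_abs_self _).trans (hP x hx)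
          have h2 : A x * (A x)⁻¹ = 1 := mul_inv_cancel₀ (hApos x).ne'
          rw [← h2]
          exact mul_le_mul_of_nonneg_left h1 (hApos x).le
        have hq : 1 ≤ A x * (K * n) ^ 2 + B x * (K * n) - n ^ 2 :=
          q_arith hn hP0 (hApos x) hBx hAP hB10 hK
        have hqq : δ ≤ δ * (Real.exp (K * n * (x - a)) *
            (A x * (K * n) ^ 2 + B x * (K * n) - n ^ 2)) := by
          apply le_mul_of_one_le_right hδ0.le
          exact one_le_mul_of_one_le_of_one_le eX hq
        have e4 : c * (x - a) ^ m * (1 - Real.exp (-τ)) / n ^ 2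
            = c * (1 - Real.exp (-τ)) * (x - a) ^ m / n ^ 2 := by ring
        rw [e4] at lo
        simp only [Pi.neg_apply, Pi.sub_apply, Pi.add_apply]
        have hδ' : δ = H * E + E := by rw [hδ]; ring
        linarith)
    simp only [Pi.neg_apply, Pi.sub_apply, Pi.add_apply, add_sub_cancel_left] at hcmp
    have hWb := (abs_le.1 (lap_abs_le (s := n ^ 2) hτ.le hn2
      (fun t ht => hH t ht (a + y) ⟨by linarith, le_rfl⟩))).1
    have e5 : (H + 1) * Real.exp (-(n ^ 2 * τ) + (K * y) * n) = δ * Real.exp (K * n * y) := by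
      rw [hδ, hE, Real.exp_add]; ring_nf
    rw [e5]
    linarith
  -- asymptotics
  have t1 := (decay_tendsto (H + 1) (K * y) hτ).const_add (H * τ)
  have t2 : Tendsto (fun n : ℝ => c2 / n ^ 2 * Real.exp (μ * n * y) * y ^ (m + 2)) atTop atTop := by
    have hμy : 0 < μ * y := by positivity
    have h1 := (Real.tendsto_exp_div_pow_atTop 2).comp (tendsto_id.const_mul_atTop hμy)
    have h2 := h1.const_mul_atTop (show 0 < c2 * (μ * y) ^ 2 * y ^ (m + 2) by positivity)
    refine h2.congr' ?_
    filter_upwards [eventually_gt_atTop 0] with n hn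
    simp only [Function.comp, id]
    field_simp
  have t3 := t1.eventually_lt_const (show H * τ + 0 < H * τ + 1 by linarith)
  obtain ⟨n, hn1, hn2, hn3⟩ := ((eventually_ge_atTop (1:ℝ)).and
    (t3.and (t2.eventually_gt_atTop (H * τ + 1)))).exists
  have := key n hn1
  linarith


lemma right_germ {ψ : ℝ → ℝ} (h : PiecewiseAnalytic ψ) (x₁ : ℝ) :
    ∃ φ : ℝ → ℝ, AnalyticAt ℝ φ x₁ ∧ ∀ᶠ x in 𝓝[≥] x₁, ψ x = φ x := by
  obtain ⟨δ, κ, φ, hδ, hmono, hbot, htop, hgap, han, heq⟩ := h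
  obtain ⟨j, hj, hjmax⟩ : ∃ j : ℤ, κ j ≤ x₁ ∧ ∀ i, κ i ≤ x₁ → i ≤ j := by
    apply Int.exists_greatest_of_bdd
    · obtain ⟨N, hN⟩ := (htop.eventually_gt_atTop x₁).exists
      refine ⟨N, fun i hi => ?_⟩
      by_contra hc
      exact absurd (hmono (not_le.1 hc)) (by linarith)
    · obtain ⟨N, hN⟩ := (hbot.eventually_le_atBot x₁).exists
      exact ⟨N, hN⟩
  have hj1 : x₁ < κ (j + 1) := by
    by_contra hc
    have := hjmax _ (not_lt.1 hc)
    omega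
  obtain ⟨g, -, hg, hg2⟩ := (han j x₁ ⟨hj, hj1.le⟩).exists_analyticAt
  refine ⟨g, hg2, ?_⟩
  filter_upwards [Ico_mem_nhdsGE hj1] with x hx
  rw [heq j x ⟨hj.trans hx.1, hx.2⟩]
  exact hg (mem_insert_of_mem _ ⟨hj.trans hx.1, hx.2.le⟩)

lemma PD.of_sol {T τ : ℝ} {b bt σ σt f : ℝ → ℝ} {u ut : ℝ → ℝ → ℝ} (hτ : τ < T)
    (hu : IsClassicalSolution T b σ f u) (hut : IsClassicalSolution T bt σt f ut) :
    PD τ (fun t x => u t x - ut t x)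
      (fun t x => deriv (fun y => u t y) x - deriv (fun y => ut t y) x)
      (fun t x => deriv (deriv (fun y => u t y)) x - deriv (deriv (fun y => ut t y)) x)
      (fun t x => deriv (fun s => u s x) t - deriv (fun s => ut s x) t) := by
  obtain ⟨c0, d0, d1, d2, ct, c1, c2, pde, ini⟩ := hu
  obtain ⟨c0', d0', d1', d2', ct', c1', c2', pde', ini'⟩ := hut
  have sub : Icc 0 τ ⊆ Ico 0 T := fun t ht => ⟨ht.1, ht.2.trans_lt hτ⟩
  have sub2 : (Icc 0 τ ×ˢ (univ : Set ℝ)) ⊆ Ico 0 T ×ˢ univ := prod_mono sub le_rfl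
  exact {
    c0 := (c0.sub c0').mono sub2
    c1 := (c1.sub c1').mono sub2
    c2 := (c2.sub c2').mono sub2
    ct := (ct.sub ct').mono sub2
    d1 := fun t ht x => (d1 t (sub ht) x).hasDerivAt.sub (d1' t (sub ht) x).hasDerivAt
    d2 := fun t ht x => (d2 t (sub ht) x).hasDerivAt.sub (d2' t (sub ht) x).hasDerivAt
    dt := fun t ht x => (d0 t (sub ht) x).hasDerivAt.sub (d0' t (sub ht) x).hasDerivAt
    z := fun x => by simp [ini x, ini' x] }

/-- Vanishing Cauchy data of the difference at `x₁`. -/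
lemma cauchy_zero {T ε x₀ x₁ : ℝ} {b bt σ σt f : ℝ → ℝ} {u ut : ℝ → ℝ → ℝ} {ω : Set ℝ}
    (hb : Continuous b) (hσ : Continuous σ) (hσpos : ∀ x, 0 < σ x)
    (hu : IsClassicalSolution T b σ f u) (hut : IsClassicalSolution T bt σt f ut)
    (hε : ε ∈ Ioo 0 T) (hω : IsOpen ω) (hobs : ∀ t ∈ Ioo 0 ε, ∀ x ∈ ω, u t x = ut t x)
    (hx₀ : x₀ ∈ ω) (h01 : x₀ ≤ x₁) (hco : ∀ x ∈ Ico x₀ x₁, b x = bt x ∧ σ x = σt x)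
    {τ : ℝ} (hτ : 0 < τ) (hτε : τ < ε) :
    (∀ t ∈ Icc 0 τ, u t x₁ - ut t x₁ = 0) ∧
    (∀ t ∈ Icc 0 τ, deriv (fun y => u t y) x₁ - deriv (fun y => ut t y) x₁ = 0) := by
  have hPD := PD.of_sol (hτε.trans hε.2) hu hut
  have hloc : ∀ t ∈ Icc 0 τ, ∀ x ∈ ω, u t x - ut t x = 0 := by
    intro t ht x hx
    rcases ht.1.eq_or_lt with h | h
    · rw [← h]; exact hPD.z x
    · rw [hobs t ⟨h, ht.2.trans_lt hτε⟩ x hx, sub_self]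
  refine unique_cont (A := fun x => 1 / 2 * σ x ^ 2) (B := b) hτ h01 hPD (by fun_prop) hb
    (fun x => by have := hσpos x; positivity) ?_ (fun t ht => hloc t ht x₀ hx₀) ?_
  · intro t ht x hx
    have ht' : t ∈ Ico 0 T := ⟨ht.1, (ht.2.trans_lt hτε).trans hε.2⟩
    obtain ⟨-, -, -, -, -, -, -, pde, -⟩ := hu
    obtain ⟨-, -, -, -, -, -, -, pde', -⟩ := hut
    rw [pde t ht' x, pde' t ht' x, ← (hco x hx).1, ← (hco x hx).2]
    ring
  · intro t ht
    have h1 := hPD.d1 t ht x₀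
    refine h1.unique ((hasDerivAt_const x₀ (0:ℝ)).congr_of_eventuallyEq ?_)
    filter_upwards [hω.mem_nhds hx₀] with y hy using hloc t ht y hy

lemma local_contra {T ε x₁ : ℝ} {b bt σ σt f : ℝ → ℝ} {u ut : ℝ → ℝ → ℝ}
    (hb : Continuous b) (hσ : Continuous σ) (hσpos : ∀ x, 0 < σ x)
    (hu : IsClassicalSolution T b σ f u) (hut : IsClassicalSolution T bt σt f ut)
    (hε : ε ∈ Ioo 0 T)
    (hz : ∀ τ, 0 < τ → τ < ε → (∀ t ∈ Icc 0 τ, u t x₁ - ut t x₁ = 0) ∧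
      (∀ t ∈ Icc 0 τ, deriv (fun y => u t y) x₁ - deriv (fun y => ut t y) x₁ = 0))
    {m : ℕ} {G1 G2 : ℝ → ℝ} (hG1 : ContinuousAt G1 x₁) (hG2 : ContinuousAt G2 x₁)
    (hβ : ∀ᶠ x in 𝓝[≥] x₁, b x - bt x = (x - x₁) ^ m * G1 x ∧
      1 / 2 * σ x ^ 2 - 1 / 2 * σt x ^ 2 = (x - x₁) ^ m * G2 x)
    (hne : G1 x₁ * deriv f x₁ + G2 x₁ * deriv (deriv f) x₁ ≠ 0) : False := by
  have hu' := hu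
  have hut' := hut
  obtain ⟨c0, d0, d1, d2, ct, c1, c2, pde, ini⟩ := hu'
  obtain ⟨c0', d0', d1', d2', ct', c1', c2', pde', ini'⟩ := hut'
  have hini : (fun y => ut 0 y) = f := funext ini'
  set v : ℝ := G1 x₁ * deriv f x₁ + G2 x₁ * deriv (deriv f) x₁ with hv
  let Γ : ℝ × ℝ → ℝ := fun p => G1 p.2 * deriv (fun y => ut p.1 y) p.2
    + G2 p.2 * deriv (deriv (fun y => ut p.1 y)) p.2
  have hT0 : (0:ℝ) ∈ Ico 0 T := ⟨le_rfl, hε.1.trans hε.2⟩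
  have hΓ0 : Γ (0, x₁) = v := by
    simp only [Γ, hini, hv]
  have hΓ : ContinuousWithinAt Γ (Ico 0 T ×ˢ univ) (0, x₁) := by
    have g1 : ContinuousAt (fun p : ℝ × ℝ => G1 p.2) (0, x₁) :=
      ContinuousAt.comp (f := Prod.snd) hG1 continuousAt_snd
    have g2 : ContinuousAt (fun p : ℝ × ℝ => G2 p.2) (0, x₁) :=
      ContinuousAt.comp (f := Prod.snd) hG2 continuousAt_snd
    exact (g1.continuousWithinAt.mul (c1' _ ⟨hT0, mem_univ _⟩)).add
      (g2.continuousWithinAt.mul (c2' _ ⟨hT0, mem_univ _⟩))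
  have hpos : ∀ᶠ p in 𝓝[Ico 0 T ×ˢ univ] ((0:ℝ), x₁), v ^ 2 / 2 < v * Γ p := by
    have h1 := hΓ.const_mul v  |>.tendsto
    rw [hΓ0] at h1
    refine h1.eventually_const_lt ?_
    have : 0 < v ^ 2 := by positivity
    nlinarith
  rw [nhdsWithin_prod_eq, nhdsWithin_univ, eventually_prod_iff] at hpos
  obtain ⟨pa, hpa, pb, hpb, hab⟩ := hpos
  -- radii
  obtain ⟨τ, hτ0, hτε, hτ⟩ : ∃ τ, 0 < τ ∧ τ < ε ∧ ∀ t ∈ Icc 0 τ, pa t := by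
    rw [nhdsWithin_Ico_eq_nhdsGE (hε.1.trans hε.2)] at hpa
    obtain ⟨r, hr, hr2⟩ := mem_nhdsGE_iff_exists_Ico_subset.1 hpa
    have hr0 : (0:ℝ) < r := hr
    refine ⟨min (r / 2) (ε / 2), by have := hε.1; positivity, ?_, ?_⟩
    · have := hε.1
      exact (min_le_right _ _).trans_lt (by linarith)
    · intro t ht
      exact hr2 ⟨ht.1, (ht.2.trans (min_le_left _ _)).trans_lt (by linarith)⟩
  obtain ⟨y, hy0, hy1, hy⟩ : ∃ y, 0 < y ∧ y ≤ 1 ∧ ∀ x ∈ Icc x₁ (x₁ + y), pb x ∧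
      (b x - bt x = (x - x₁) ^ m * G1 x ∧
      1 / 2 * σ x ^ 2 - 1 / 2 * σt x ^ 2 = (x - x₁) ^ m * G2 x) := by
    have h2 := (hpb.filter_mono nhdsWithin_le_nhds : ∀ᶠ x in 𝓝[≥] x₁, pb x).and hβ
    obtain ⟨r, hr, hr2⟩ := mem_nhdsGE_iff_exists_Ico_subset.1 h2
    have hr0 : x₁ < r := hr
    refine ⟨min ((r - x₁) / 2) 1, by have := sub_pos.2 hr0; positivity, min_le_right _ _, ?_⟩
    intro x hx
    refine hr2 ⟨hx.1, ?_⟩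
    have := hx.2
    have := min_le_left ((r - x₁) / 2) 1
    linarith
  have hPD := PD.of_sol (hτε.trans hε.2) hu hut
  obtain ⟨hz0, hz1⟩ := hz τ hτ0 hτε
  have sub : Icc 0 τ ⊆ Ico 0 T := fun t ht => ⟨ht.1, (ht.2.trans_lt hτε).trans hε.2⟩
  have sub2 : (Icc 0 τ ×ˢ (univ : Set ℝ)) ⊆ Ico 0 T ×ˢ univ := prod_mono sub le_rfl
  have hcont : ∀ x, ContinuousOn (fun t => (x - x₁) ^ m * Γ (t, x)) (Icc 0 τ) := by
    intro x
    have k1 := slice_cont (w := fun t x => deriv (fun y => ut t y) x) (c1'.mono sub2) x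
    have k2 := slice_cont (w := fun t x => deriv (deriv (fun y => ut t y)) x) (c2'.mono sub2) x
    have k3 : ContinuousOn (fun t => G1 x * deriv (fun y => ut t y) x
        + G2 x * deriv (deriv (fun y => ut t y)) x) (Icc 0 τ) :=
      (continuousOn_const.mul k1).add (continuousOn_const.mul k2)
    exact continuousOn_const.mul k3
  have heq : ∀ t ∈ Icc 0 τ, ∀ x ∈ Icc x₁ (x₁ + y),
      deriv (fun s => u s x) t - deriv (fun s => ut s x) t
      = 1 / 2 * σ x ^ 2 * (deriv (deriv (fun y => u t y)) x - deriv (deriv (fun y => ut t y)) x)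
        + b x * (deriv (fun y => u t y) x - deriv (fun y => ut t y) x)
        + (x - x₁) ^ m * Γ (t, x) := by
    intro t ht x hx
    obtain ⟨-, e1, e2⟩ := hy x hx
    rw [pde t (sub ht) x, pde' t (sub ht) x]
    simp only [Γ]
    linear_combination (deriv (fun y => ut t y) x) * e1
      + (deriv (deriv (fun y => ut t y)) x) * e2
  have hlow : ∀ t ∈ Icc 0 τ, ∀ x ∈ Icc x₁ (x₁ + y), v ^ 2 / 2 < v * Γ (t, x) :=
    fun t ht x hx => hab (hτ t ht) (hy x hx).1
  have hApos : ∀ x, 0 < 1 / 2 * σ x ^ 2 := fun x => by have := hσpos x; positivity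
  rcases lt_or_gt_of_ne hne with hneg | hgt
  · refine strict_contra (A := fun x => 1 / 2 * σ x ^ 2) (B := b) (a := x₁) (m := m) (c := -v / 2)
      (g := fun t x => -((x - x₁) ^ m * Γ (t, x))) hτ0 hy0 hy1 (by linarith) hPD.neg
      (by fun_prop) hb hApos (fun x _ => (hcont x).neg) ?_ ?_ ?_ ?_
    · intro t ht x hx
      have := heq t ht x hx
      linarith
    · intro t ht; simp only [hz0 t ht, neg_zero]
    · intro t ht; simp only [hz1 t ht, neg_zero]
    · intro t ht x hx
      have h1 := hlow t ht x hx
      have h2 : -v / 2 ≤ - Γ (t, x) := by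
        by_contra hc
        push Not at hc
        nlinarith
      have h3 : 0 ≤ (x - x₁) ^ m := pow_nonneg (by linarith [hx.1]) _
      have := mul_le_mul_of_nonneg_left h2 h3
      linarith
  · refine strict_contra (A := fun x => 1 / 2 * σ x ^ 2) (B := b) (a := x₁) (m := m) (c := v / 2)
      (g := fun t x => (x - x₁) ^ m * Γ (t, x)) hτ0 hy0 hy1 (by linarith) hPD
      (by fun_prop) hb hApos (fun x _ => hcont x) heq hz0 hz1 ?_
    intro t ht x hx
    have h1 := hlow t ht x hx
    have h2 : v / 2 ≤ Γ (t, x) := by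
      by_contra hc
      push Not at hc
      nlinarith
    have h3 : 0 ≤ (x - x₁) ^ m := pow_nonneg (by linarith [hx.1]) _
    have := mul_le_mul_of_nonneg_left h2 h3
    linarith


/-- One-sided (rightward) determination in the proof of Theorem 3: the first- and
second-moment observations determine both coefficients on `(x₀, +∞)` for every `x₀`
in the observation set. -/
theorem drift_diffusion_uniqueness_rightward
    (T : ℝ) (hT : 0 < T)
    (b bt sigma sigmat : ℝ → ℝ)
    (hb : ClassM b) (hbt : ClassM bt)
    (hs : ClassM sigma) (hst : ClassM sigmat)
    (hspos : ∀ x, 0 < sigma x) (hstpos : ∀ x, 0 < sigmat x)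
    (u₁ u₂ ut₁ ut₂ : ℝ → ℝ → ℝ)
    (hu₁ : IsClassicalSolution T b sigma (fun x => x ^ 1) u₁)
    (hu₂ : IsClassicalSolution T b sigma (fun x => x ^ 2) u₂)
    (hut₁ : IsClassicalSolution T bt sigmat (fun x => x ^ 1) ut₁)
    (hut₂ : IsClassicalSolution T bt sigmat (fun x => x ^ 2) ut₂)
    (ε : ℝ) (hε : ε ∈ Ioo 0 T)
    (ω : Set ℝ) (hω : IsOpen ω) (hωne : ω.Nonempty)
    (hobs₁ : ∀ t ∈ Ioo 0 ε, ∀ x ∈ ω, u₁ t x = ut₁ t x)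
    (hobs₂ : ∀ t ∈ Ioo 0 ε, ∀ x ∈ ω, u₂ t x = ut₂ t x) :
    ∀ x₀ ∈ ω, ∀ x ∈ Ioi x₀, b x = bt x ∧ sigma x = sigmat x := by
  intro x₀ hx₀ x hx
  have cb : Continuous b := hb.1.choose_spec.continuous
  have cs : Continuous sigma := hs.1.choose_spec.continuous
  by_contra hbad
  set S : Set ℝ := {z | x₀ ≤ z ∧ ¬ (b z = bt z ∧ sigma z = sigmat z)} with hS
  have hSne : S.Nonempty := ⟨x, (mem_Ioi.1 hx).le, hbad⟩
  have hSb : BddBelow S := ⟨x₀, fun z hz => hz.1⟩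
  set x₁ := sInf S with hx₁
  have h01 : x₀ ≤ x₁ := le_csInf hSne fun z hz => hz.1
  have hco : ∀ z ∈ Ico x₀ x₁, b z = bt z ∧ sigma z = sigmat z := by
    intro z hz
    by_contra hc
    exact absurd (csInf_le hSb ⟨hz.1, hc⟩) (not_le.2 hz.2)
  obtain ⟨φ, hφ, hφe⟩ := right_germ hb.2 x₁
  obtain ⟨φt, hφt, hφte⟩ := right_germ hbt.2 x₁
  obtain ⟨χ, hχ, hχe⟩ := right_germ hs.2 x₁
  obtain ⟨χt, hχt, hχte⟩ := right_germ hst.2 x₁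
  let F : ℝ → ℝ × ℝ := fun z => (φ z - φt z, 1 / 2 * χ z ^ 2 - 1 / 2 * χt z ^ 2)
  have hF : AnalyticAt ℝ F x₁ := by
    have k1 : AnalyticAt ℝ (fun z => φ z - φt z) x₁ := hφ.fun_sub hφt
    have k2 : AnalyticAt ℝ (fun z => 1 / 2 * χ z ^ 2 - 1 / 2 * χt z ^ 2) x₁ :=
      (analyticAt_const.fun_mul (hχ.fun_pow 2)).fun_sub (analyticAt_const.fun_mul (hχt.fun_pow 2))
    exact k1.prod k2
  by_cases hzero : ∀ᶠ z in 𝓝 x₁, F z = 0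
  · -- extension past x₁
    have hall : ∀ᶠ z in 𝓝[≥] x₁, b z = bt z ∧ sigma z = sigmat z := by
      filter_upwards [hφe, hφte, hχe, hχte, hzero.filter_mono nhdsWithin_le_nhds] with z a1 a2 a3 a4 a5
      have e1 : φ z - φt z = 0 := congrArg Prod.fst a5
      have e2 : 1 / 2 * χ z ^ 2 - 1 / 2 * χt z ^ 2 = 0 := congrArg Prod.snd a5
      rw [← a1, ← a2] at e1
      rw [← a3, ← a4] at e2
      refine ⟨by linarith, ?_⟩
      have := hspos z
      have := hstpos z
      nlinarith
    obtain ⟨r, hr, hr2⟩ := mem_nhdsGE_iff_exists_Ico_subset.1 hall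
    have hr0 : x₁ < r := hr
    have : r ≤ x₁ := by
      refine le_csInf hSne fun z hz => ?_
      by_contra hc
      exact hz.2 (hr2 ⟨csInf_le hSb hz, not_le.1 hc⟩)
    linarith
  · obtain ⟨m, G, hG, hG0, hGe⟩ := hF.exists_eventuallyEq_pow_smul_nonzero_iff.2 hzero
    have hG1 : ContinuousAt (fun z => (G z).1) x₁ := hG.continuousAt.fst
    have hG2 : ContinuousAt (fun z => (G z).2) x₁ := hG.continuousAt.snd
    have hβ : ∀ᶠ z in 𝓝[≥] x₁, b z - bt z = (z - x₁) ^ m * (G z).1 ∧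
        1 / 2 * sigma z ^ 2 - 1 / 2 * sigmat z ^ 2 = (z - x₁) ^ m * (G z).2 := by
      filter_upwards [hφe, hφte, hχe, hχte, hGe.filter_mono nhdsWithin_le_nhds] with z a1 a2 a3 a4 a5
      rw [a1, a2, a3, a4]
      exact ⟨congrArg Prod.fst a5, congrArg Prod.snd a5⟩
    have l1 := local_contra cb cs hspos hu₁ hut₁ hε
      (fun τ h1 h2 => cauchy_zero cb cs hspos hu₁ hut₁ hε hω hobs₁ hx₀ h01 hco h1 h2) hG1 hG2 hβ
    have l2 := local_contra cb cs hspos hu₂ hut₂ hε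
      (fun τ h1 h2 => cauchy_zero cb cs hspos hu₂ hut₂ hε hω hobs₂ hx₀ h01 hco h1 h2) hG1 hG2 hβ
    have d11 : deriv (fun x : ℝ => x ^ 1) = fun _ => 1 := by
      ext z; simp
    have d21 : deriv (fun x : ℝ => x ^ 2) = fun x => 2 * x := by
      ext z; simp
    have d22 : deriv (fun x : ℝ => 2 * x) = fun _ => 2 := by
      ext z
      simpa using ((hasDerivAt_id z).const_mul (2:ℝ)).deriv
    rw [d11] at l1
    rw [d21, d22] at l2
    simp only [deriv_const', mul_one, mul_zero, add_zero, not_not] at l1 l2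
    have g1 : (G x₁).1 = 0 := by
      by_contra hc
      exact l1 hc
    have g2 : (G x₁).2 = 0 := by
      by_contra hc
      refine l2 ?_
      rw [g1]
      simpa using hc
    exact hG0 (Prod.ext g1 g2)
end
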